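/- arXiv:math/0406062 — 6 statements merged into one kernel-verified Lean document; each statement's English description precedes it below -/
import Mathlib

section
/- Let R be a ring with a central invertible element q, and let X = (x_{ij}) be an n×n q-generic matrix over R. Then the quantum determinant det_q X commutes with every entry of X: (det_q X)·x_{kl} = x_{kl}·(det_q X) for all k, l. In particular det_q X is central in the subring generated by the entries of X. -/
/-!
The quantum determinant commutes with the entries because `X` has a two-sided quantum adjugate `S`:
with `c = -q⁻¹`, both `X * S` and `S * X` are `c ^ (n - 1) • det • 1`. Comparing `(X * S) * X` with
`X * (S * X)` and cancelling the power of `c` gives `det * x_{kl} = x_{kl} * det`.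

The entries of `S` are quantum minors, which live in the quantum exterior algebra with generators
`e_j`: the minor with rows `i_1 < … < i_m` and columns `T` is the coefficient of `e_T` in the
product `ξ_{i_1} ⋯ ξ_{i_m}`, where `ξ_i = ∑ j, x_{ij} e_j`. By the quantum relations, `ξ_i ξ_i = 0`
and `ξ_j ξ_i = c ξ_i ξ_j` for `i < j`. Hence a row placed in front of, or behind, an increasing
product of rows moves to its own position at the cost of a power of `c`, and it annihilates the
product if it already occurs there. Placed in front, this computes `X * S`. Placed behind, for
the transpose of `X`, which satisfies the same relations, it computes `S * X`, because quantum
minors are invariant under transposition.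
-/

/-- The number of inversions (the "length" `ℓ`) of a tuple. -/
def tupleInv {m : ℕ} {α : Type*} [LinearOrder α] (f : Fin m → α) : ℕ :=
  ((Finset.univ : Finset (Fin m × Fin m)).filter fun p => p.1 < p.2 ∧ f p.2 < f p.1).card

/-- The quantum determinant `det_q A = ∑_σ (-q)^{-ℓ(σ)} a_{1,σ1} ⋯ a_{n,σn}`. -/
def qdet {R : Type*} [Ring R] {n : ℕ} (q : Rˣ) (A : Matrix (Fin n) (Fin n) R) : R :=
  ∑ σ : Equiv.Perm (Fin n),
    (((-q) ^ (-(tupleInv fun i => σ i : ℤ)) : Rˣ) : R) * (List.ofFn fun i => A i (σ i)).prod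

/-- A matrix is `q`-generic if its entries satisfy the standard quantum relations. -/
def qGeneric {R : Type*} [Ring R] {n m : ℕ} (q : Rˣ) (X : Matrix (Fin n) (Fin m) R) : Prop :=
  (∀ (k : Fin n) (i j : Fin m), i < j → X k j * X k i = (q : R) * (X k i * X k j)) ∧
  (∀ (i j : Fin n) (k : Fin m), i < j → X j k * X i k = (q : R) * (X i k * X j k)) ∧
  (∀ (i j : Fin n) (k l : Fin m), i < j → k < l → X j k * X i l = X i l * X j k) ∧
  (∀ (i j : Fin n) (k l : Fin m), i < j → k < l →
    X j l * X i k = X i k * X j l + ((q : R) - ((q⁻¹ : Rˣ) : R)) * (X i l * X j k))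

open Finset

section OrderedFinset

variable {ι : Type*} [LinearOrder ι]

lemma disjoint_filter_lt_filter_gt (S : Finset ι) (i : ι) :
    Disjoint {s ∈ S | s < i} {s ∈ S | i < s} :=
  disjoint_filter.2 fun _ _ h h' => lt_asymm h h'

lemma filter_lt_union_filter_gt (S : Finset ι) (i : ι) :
    {s ∈ S | s < i} ∪ {s ∈ S | i < s} = S.erase i := by
  rw [← filter_or, ← filter_ne']
  exact filter_congr fun s _ => lt_or_lt_iff_ne

lemma card_filter_lt_add_card_filter_gt {S : Finset ι} {i : ι} (hi : i ∈ S) :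
    #{s ∈ S | s < i} + #{s ∈ S | i < s} = #S - 1 := by
  rw [← card_union_of_disjoint (disjoint_filter_lt_filter_gt S i), filter_lt_union_filter_gt,
    card_erase_of_mem hi]

lemma card_filter_erase_add_one {S : Finset ι} {i : ι} {p : ι → Prop} [DecidablePred p]
    (hi : i ∈ S) (hp : p i) : #{s ∈ S.erase i | p s} + 1 = #{s ∈ S | p s} := by
  rw [filter_erase, card_erase_add_one (mem_filter.2 ⟨hi, hp⟩)]

lemma filter_erase_of_not (S : Finset ι) {i : ι} {p : ι → Prop} [DecidablePred p] (hp : ¬p i) :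
    {s ∈ S.erase i | p s} = {s ∈ S | p s} := by
  rw [filter_erase, erase_eq_of_notMem fun h => hp (mem_filter.1 h).2]

lemma sum_erase_eq_sum_lt {M : Type*} [AddCommMonoid M] (S : Finset ι) (g : ι → ι → M) :
    ∑ a ∈ S, ∑ b ∈ S.erase a, g a b = ∑ a ∈ S, ∑ b ∈ S with a < b, (g a b + g b a) := by
  simp only [← filter_lt_union_filter_gt, sum_union (disjoint_filter_lt_filter_gt S _),
    sum_add_distrib]
  rw [add_comm]
  congr 1
  exact sum_comm' fun a b => by simp only [mem_filter]; tauto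

lemma sum_insert_min {Z M : Type*} [Semiring Z] [AddCommMonoid M] [Module Z M] (c : Z)
    {a : ι} {s : Finset ι} (ha : ∀ x ∈ s, a < x) (f : ι → Finset ι → M) :
    ∑ i ∈ insert a s, c ^ #{x ∈ insert a s | x < i} • f i ((insert a s).erase i) =
      f a s + c • ∑ i ∈ s, c ^ #{x ∈ s | x < i} • f i (insert a (s.erase i)) := by
  have has : a ∉ s := fun h => lt_irrefl a (ha a h)
  rw [sum_insert has, erase_insert has, smul_sum]
  congr 1
  · rw [filter_false_of_mem, card_empty, pow_zero, one_smul]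
    exact forall_mem_insert _ _ _ |>.2 ⟨lt_irrefl a, fun x hx => (ha x hx).not_gt⟩
  · refine sum_congr rfl fun i hi => ?_
    rw [← card_filter_erase_add_one (mem_insert_self a s) (ha i hi), erase_insert has,
      erase_insert_of_ne (ha i hi).ne, pow_succ', mul_smul]

lemma sort_union_of_lt {s t : Finset ι} (h : ∀ a ∈ s, ∀ b ∈ t, a < b) :
    (s ∪ t).sort = s.sort ++ t.sort := by
  have hlt : (s.sort ++ t.sort).Pairwise (· < ·) :=
    List.pairwise_append.2 ⟨s.sortedLT_sort.pairwise, t.sortedLT_sort.pairwise,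
      fun a ha b hb => h a ((mem_sort _).1 ha) b ((mem_sort _).1 hb)⟩
  have hsort := (List.toFinset_sort (· ≤ ·) (hlt.imp ne_of_lt)).2 (hlt.imp le_of_lt)
  rwa [List.toFinset_append, sort_toFinset, sort_toFinset] at hsort

end OrderedFinset

section OrderedProd

variable {ι A : Type*} [LinearOrder ι] [Monoid A]

/-- The product of the family `ξ` over the finite set `S` in increasing order of the index. -/
def orderedProd (ξ : ι → A) (S : Finset ι) : A := (S.sort.map ξ).prod

@[simp]
lemma orderedProd_empty (ξ : ι → A) : orderedProd ξ ∅ = 1 := by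
  simp [orderedProd]

lemma orderedProd_union_of_lt (ξ : ι → A) {s t : Finset ι} (h : ∀ a ∈ s, ∀ b ∈ t, a < b) :
    orderedProd ξ (s ∪ t) = orderedProd ξ s * orderedProd ξ t := by
  simp only [orderedProd, sort_union_of_lt h, List.map_append, List.prod_append]

lemma orderedProd_insert_min (ξ : ι → A) {a : ι} {s : Finset ι} (ha : ∀ x ∈ s, a < x) :
    orderedProd ξ (insert a s) = ξ a * orderedProd ξ s := by
  rw [insert_eq, orderedProd_union_of_lt ξ (by simpa using ha)]
  simp [orderedProd]

lemma orderedProd_erase (ξ : ι → A) (S : Finset ι) (i : ι) :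
    orderedProd ξ (S.erase i) =
      orderedProd ξ {s ∈ S | s < i} * orderedProd ξ {s ∈ S | i < s} := by
  rw [← filter_lt_union_filter_gt, orderedProd_union_of_lt]
  exact fun a ha b hb => (mem_filter.1 ha).2.trans (mem_filter.1 hb).2

lemma orderedProd_eq_mul_mul (ξ : ι → A) {S : Finset ι} {i : ι} (hi : i ∈ S) :
    orderedProd ξ S =
      orderedProd ξ {s ∈ S | s < i} * (ξ i * orderedProd ξ {s ∈ S | i < s}) := by
  rw [← orderedProd_insert_min ξ fun x hx => (mem_filter.1 hx).2, ← orderedProd_union_of_lt,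
    union_insert, filter_lt_union_filter_gt, insert_erase hi]
  intro a ha b hb
  rcases mem_insert.1 hb with rfl | hb
  · exact (mem_filter.1 ha).2
  · exact (mem_filter.1 ha).2.trans (mem_filter.1 hb).2

end OrderedProd

section QGrassmann

variable {Z A ι : Type*} [CommSemiring Z] [Semiring A] [Algebra Z A] [LinearOrder ι]

lemma mul_list_prod_of_smul_comm {c : Z} {x : A} {l : List A}
    (h : ∀ y ∈ l, x * y = c • (y * x)) : x * l.prod = c ^ l.length • (l.prod * x) := by
  induction l with
  | nil => simp
  | cons y l ih =>
    rw [List.prod_cons, ← mul_assoc, h y List.mem_cons_self, smul_mul_assoc, mul_assoc,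
      ih fun z hz => h z (List.mem_cons_of_mem y hz), mul_smul_comm, smul_smul,
      List.length_cons, pow_succ', mul_assoc]

lemma list_prod_mul_of_smul_comm {c : Z} {x : A} {l : List A}
    (h : ∀ y ∈ l, y * x = c • (x * y)) : l.prod * x = c ^ l.length • (x * l.prod) := by
  induction l with
  | nil => simp
  | cons y l ih =>
    rw [List.prod_cons, mul_assoc, ih fun z hz => h z (List.mem_cons_of_mem y hz),
      mul_smul_comm, ← mul_assoc, h y List.mem_cons_self, smul_mul_assoc, smul_smul,
      List.length_cons, pow_succ, mul_assoc]

/-- The family `ξ` satisfies the relations of the generators of the quantum exterior algebra with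
parameter `c`, which is `-q⁻¹` in the usual notation. -/
structure IsQGrassmann (c : Z) (ξ : ι → A) : Prop where
  mul_self : ∀ i, ξ i * ξ i = 0
  mul_of_lt : ∀ ⦃i j⦄, i < j → ξ j * ξ i = c • (ξ i * ξ j)

namespace IsQGrassmann

variable {c : Z} {ξ : ι → A} {S : Finset ι} {i : ι}

lemma mul_orderedProd_of_lt (hξ : IsQGrassmann c ξ) (hS : ∀ s ∈ S, s < i) :
    ξ i * orderedProd ξ S = c ^ #S • (orderedProd ξ S * ξ i) := by
  have h := mul_list_prod_of_smul_comm (c := c) (x := ξ i) (l := S.sort.map ξ)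
    (by simpa using fun s hs => hξ.mul_of_lt (hS s hs))
  rwa [List.length_map, length_sort] at h

lemma orderedProd_mul_of_lt (hξ : IsQGrassmann c ξ) (hS : ∀ s ∈ S, i < s) :
    orderedProd ξ S * ξ i = c ^ #S • (ξ i * orderedProd ξ S) := by
  have h := list_prod_mul_of_smul_comm (c := c) (x := ξ i) (l := S.sort.map ξ)
    (by simpa using fun s hs => hξ.mul_of_lt (hS s hs))
  rwa [List.length_map, length_sort] at h

lemma mul_orderedProd_erase (hξ : IsQGrassmann c ξ) (hi : i ∈ S) :
    ξ i * orderedProd ξ (S.erase i) = c ^ #{s ∈ S | s < i} • orderedProd ξ S := by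
  rw [orderedProd_erase, ← mul_assoc, hξ.mul_orderedProd_of_lt fun s hs => (mem_filter.1 hs).2,
    smul_mul_assoc, mul_assoc, orderedProd_eq_mul_mul ξ hi]

lemma orderedProd_erase_mul (hξ : IsQGrassmann c ξ) (hi : i ∈ S) :
    orderedProd ξ (S.erase i) * ξ i = c ^ #{s ∈ S | i < s} • orderedProd ξ S := by
  rw [orderedProd_erase, mul_assoc, hξ.orderedProd_mul_of_lt fun s hs => (mem_filter.1 hs).2,
    mul_smul_comm, orderedProd_eq_mul_mul ξ hi]

lemma mul_orderedProd_of_mem (hξ : IsQGrassmann c ξ) (hi : i ∈ S) :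
    ξ i * orderedProd ξ S = 0 := by
  rw [orderedProd_eq_mul_mul ξ hi, ← mul_assoc,
    hξ.mul_orderedProd_of_lt fun s hs => (mem_filter.1 hs).2, smul_mul_assoc, mul_assoc,
    ← mul_assoc (ξ i), hξ.mul_self, zero_mul, mul_zero, smul_zero]

lemma orderedProd_mul_of_mem (hξ : IsQGrassmann c ξ) (hi : i ∈ S) :
    orderedProd ξ S * ξ i = 0 := by
  rw [orderedProd_eq_mul_mul ξ hi, mul_assoc, mul_assoc,
    hξ.orderedProd_mul_of_lt fun s hs => (mem_filter.1 hs).2, mul_smul_comm, ← mul_assoc (ξ i),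
    hξ.mul_self, zero_mul, smul_zero, mul_zero]

end IsQGrassmann

end QGrassmann

section Wedge

variable {Z R κ : Type*} [CommRing Z] [Ring R] [Algebra Z R] [LinearOrder κ]

/-- Left multiplication by `∑ j, x j e_j` on the quantum exterior algebra over `R` with generators
`e_j`. An element of that algebra is encoded by its coefficients in the basis of increasing
products `e_S`, hence as a function `Finset κ → R`; the product `e_j e_{S \ j}` is `e_S` up to a
factor `c` for each `s ∈ S` with `s < j`. -/
def leftWedge (c : Z) (x : κ → R) : Module.End Z (Finset κ → R) where
  toFun F S := ∑ j ∈ S, c ^ #{s ∈ S | s < j} • (x j * F (S.erase j))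
  map_add' F G := by
    funext S
    simp only [Pi.add_apply, mul_add, smul_add, sum_add_distrib]
  map_smul' d F := by
    funext S
    simp only [Pi.smul_apply, mul_smul_comm, smul_sum, smul_comm d, RingHom.id_apply]

/-- Right multiplication by `∑ j, x j e_j` on the quantum exterior algebra, encoded as for
`leftWedge`: the product `e_{S \ j} e_j` is `e_S` up to a factor `c` for each `s ∈ S` with
`j < s`. -/
def rightWedge (c : Z) (x : κ → R) : Module.End Z (Finset κ → R) where
  toFun F S := ∑ j ∈ S, c ^ #{s ∈ S | j < s} • (F (S.erase j) * x j)
  map_add' F G := by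
    funext S
    simp only [Pi.add_apply, add_mul, smul_add, sum_add_distrib]
  map_smul' d F := by
    funext S
    simp only [Pi.smul_apply, smul_mul_assoc, smul_sum, smul_comm d, RingHom.id_apply]

lemma leftWedge_apply (c : Z) (x : κ → R) (F : Finset κ → R) (S : Finset κ) :
    leftWedge c x F S = ∑ j ∈ S, c ^ #{s ∈ S | s < j} • (x j * F (S.erase j)) :=
  rfl

lemma rightWedge_apply (c : Z) (x : κ → R) (F : Finset κ → R) (S : Finset κ) :
    rightWedge c x F S = ∑ j ∈ S, c ^ #{s ∈ S | j < s} • (F (S.erase j) * x j) :=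
  rfl

lemma leftWedge_leftWedge_apply (c : Z) (x y : κ → R) (F : Finset κ → R) (S : Finset κ) :
    leftWedge c x (leftWedge c y F) S = ∑ a ∈ S, ∑ b ∈ S with a < b,
      c ^ (#{s ∈ S | s < a} + #{s ∈ S.erase a | s < b}) •
        ((x a * y b + c • (x b * y a)) * F ((S.erase a).erase b)) := by
  simp only [leftWedge_apply, mul_sum, smul_sum, mul_smul_comm, smul_smul, ← pow_add]
  rw [sum_erase_eq_sum_lt]
  refine sum_congr rfl fun a ha => sum_congr rfl fun b hb => ?_
  have hab : a < b := (mem_filter.1 hb).2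
  have hcard : #{s ∈ S | s < b} + #{s ∈ S.erase b | s < a} =
      #{s ∈ S | s < a} + #{s ∈ S.erase a | s < b} + 1 := by
    rw [filter_erase_of_not S (p := (· < a)) hab.not_gt, ← card_filter_erase_add_one ha hab]
    ring
  rw [hcard, erase_right_comm (a := b) (b := a), add_mul, smul_add, smul_mul_assoc, smul_smul,
    ← pow_succ, mul_assoc, mul_assoc]

lemma leftWedge_commute_rightWedge (c : Z) (x y : κ → R) :
    Commute (leftWedge c x) (rightWedge c y) := by
  refine LinearMap.ext fun F => funext fun S => ?_
  simp only [Module.End.mul_apply, leftWedge_apply, rightWedge_apply, mul_sum, sum_mul, smul_sum,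
    mul_smul_comm, smul_mul_assoc, smul_smul, ← pow_add]
  rw [sum_comm' (s' := fun b => S.erase b) (t' := S) fun a b => by simp only [mem_erase]; tauto]
  refine sum_congr rfl fun b hb => sum_congr rfl fun a ha => ?_
  obtain ⟨hab, ha⟩ := mem_erase.1 ha
  have hcard : #{s ∈ S | s < a} + #{s ∈ S.erase a | b < s} =
      #{s ∈ S | b < s} + #{s ∈ S.erase b | s < a} := by
    rcases lt_or_gt_of_ne hab with hab | hab
    · rw [filter_erase_of_not S (p := (b < ·)) hab.not_gt,
        filter_erase_of_not S (p := (· < a)) hab.not_gt, add_comm]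
    · rw [← card_filter_erase_add_one ha hab, ← card_filter_erase_add_one hb hab]
      ring
  rw [hcard, erase_right_comm (a := a), mul_assoc]

lemma rightWedge_single_empty (c : Z) (x : κ → R) :
    rightWedge c x (Pi.single ∅ 1) = leftWedge c x (Pi.single ∅ 1) := by
  funext S
  refine sum_congr rfl fun j hj => ?_
  by_cases hS : S.erase j = ∅
  · obtain rfl : S = {j} := ((erase_eq_empty_iff S j).1 hS).resolve_left (ne_empty_of_mem hj)
    simp [filter_singleton]
  · simp [hS]

end Wedge

section QMinor

variable {Z R ι κ : Type*} [CommRing Z] [Ring R] [Algebra Z R] [LinearOrder ι] [LinearOrder κ]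

/-- The quantum minor of `X` with rows `S` and columns `T`: the coefficient of `e_T` in the product,
in increasing order of `i ∈ S`, of the rows `∑ j, X i j e_j` in the quantum exterior algebra. It is
zero unless `S` and `T` have the same number of elements. -/
def qMinor (c : Z) (X : Matrix ι κ R) (S : Finset ι) (T : Finset κ) : R :=
  orderedProd (fun i => leftWedge c (X.row i)) S (Pi.single ∅ 1) T

/-- The rows `ξ i = ∑ j, X i j e_j` of `X` satisfy the relations of the quantum exterior algebra
with generators `e_j` and parameter `c`, written in terms of the entries. For `c = -q⁻¹` these are
the relations of a `q`-Manin matrix, with the roles of rows and columns exchanged. -/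
structure IsQManin (c : Z) (X : Matrix ι κ R) : Prop where
  row_self : ∀ (i : ι) ⦃a b : κ⦄, a < b → X i a * X i b + c • (X i b * X i a) = 0
  row_of_lt : ∀ ⦃i j : ι⦄ ⦃a b : κ⦄, i < j → a < b →
    X j a * X i b + c • (X j b * X i a) = c • (X i a * X j b + c • (X i b * X j a))

variable {c : Z} {X : Matrix ι κ R}

lemma IsQManin.isQGrassmann (hX : IsQManin c X) :
    IsQGrassmann c fun i => leftWedge c (X.row i) where
  mul_self i := by
    refine LinearMap.ext fun F => funext fun S => ?_
    rw [Module.End.mul_apply, leftWedge_leftWedge_apply]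
    refine sum_eq_zero fun a _ => sum_eq_zero fun b hb => ?_
    rw [Matrix.row_apply, Matrix.row_apply, hX.row_self i (mem_filter.1 hb).2, zero_mul, smul_zero]
  mul_of_lt i j hij := by
    refine LinearMap.ext fun F => funext fun S => ?_
    simp only [LinearMap.smul_apply, Pi.smul_apply, Module.End.mul_apply,
      leftWedge_leftWedge_apply, smul_sum]
    refine sum_congr rfl fun a _ => sum_congr rfl fun b hb => ?_
    simp only [Matrix.row_apply, hX.row_of_lt hij (mem_filter.1 hb).2]
    rw [smul_mul_assoc, smul_comm]

lemma sum_mul_qMinor (c : Z) (X : Matrix ι κ R) (k : ι) (S : Finset ι) (T : Finset κ) :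
    ∑ j ∈ T, c ^ #{t ∈ T | t < j} • (X k j * qMinor c X S (T.erase j)) =
      (leftWedge c (X.row k) * orderedProd (fun i => leftWedge c (X.row i)) S)
        (Pi.single ∅ 1) T :=
  rfl

lemma sum_qMinor_mul (c : Z) (X : Matrix ι κ R) (k : ι) (S : Finset ι) (T : Finset κ) :
    ∑ j ∈ T, c ^ #{t ∈ T | j < t} • (qMinor c X S (T.erase j) * X k j) =
      (orderedProd (fun i => leftWedge c (X.row i)) S * leftWedge c (X.row k))
        (Pi.single ∅ 1) T := by
  have hcomm : Commute (orderedProd (fun i => leftWedge c (X.row i)) S)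
      (rightWedge c (X.row k)) :=
    Commute.list_prod_left _ _ <| by simp [leftWedge_commute_rightWedge]
  rw [Module.End.mul_apply, ← rightWedge_single_empty, ← Module.End.mul_apply, hcomm.eq]
  rfl

lemma qMinor_empty_left (c : Z) (X : Matrix ι κ R) (T : Finset κ) :
    qMinor c X ∅ T = if T = ∅ then 1 else 0 := by
  simp [qMinor, Pi.single_apply]

lemma qMinor_insert_min_left (c : Z) (X : Matrix ι κ R) {a : ι} {S : Finset ι}
    (ha : ∀ s ∈ S, a < s) (T : Finset κ) :
    qMinor c X (insert a S) T =
      ∑ j ∈ T, c ^ #{t ∈ T | t < j} • (X a j * qMinor c X S (T.erase j)) := by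
  rw [sum_mul_qMinor, qMinor, orderedProd_insert_min _ ha]

lemma qMinor_empty_right (c : Z) (X : Matrix ι κ R) (S : Finset ι) :
    qMinor c X S ∅ = if S = ∅ then 1 else 0 := by
  induction S using Finset.induction_on_min with
  | empty => simp [qMinor_empty_left]
  | insert a s ha _ => simp [qMinor_insert_min_left c X ha]

-- The recursion along the first row and the one along the first column agree because the two
-- entries they extract, `X a j` and `X i b`, commute when `a < i` and `b < j`.
lemma qMinor_insert_min_right
    (hcomm : ∀ ⦃i j : ι⦄ ⦃a b : κ⦄, i < j → a < b → Commute (X j a) (X i b)) (S : Finset ι) {b : κ}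
    {T : Finset κ} (hb : ∀ t ∈ T, b < t) :
    qMinor c X S (insert b T) =
      ∑ i ∈ S, c ^ #{s ∈ S | s < i} • (X i b * qMinor c X (S.erase i) T) := by
  induction S using Finset.induction_on_min generalizing T with
  | empty => simp [qMinor_empty_left]
  | insert a s ha ih =>
    calc qMinor c X (insert a s) (insert b T)
        = X a b * qMinor c X s T + c • ∑ j ∈ T, c ^ #{t ∈ T | t < j} •
            (X a j * qMinor c X s (insert b (T.erase j))) := by
          rw [qMinor_insert_min_left c X ha,
            sum_insert_min c hb fun j U => X a j * qMinor c X s U]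
      _ = X a b * qMinor c X s T + c • ∑ j ∈ T, c ^ #{t ∈ T | t < j} •
            (X a j * ∑ i ∈ s, c ^ #{x ∈ s | x < i} •
              (X i b * qMinor c X (s.erase i) (T.erase j))) := by
          congr 2
          exact sum_congr rfl fun j _ => by rw [ih fun t ht => hb t (mem_of_mem_erase ht)]
      _ = X a b * qMinor c X s T + c • ∑ i ∈ s, c ^ #{x ∈ s | x < i} •
            (X i b * ∑ j ∈ T, c ^ #{t ∈ T | t < j} •
              (X a j * qMinor c X (s.erase i) (T.erase j))) := by
          simp only [mul_sum, smul_sum, mul_smul_comm]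
          rw [sum_comm]
          refine congrArg _ (sum_congr rfl fun i hi => sum_congr rfl fun j hj => ?_)
          rw [← mul_assoc, ← mul_assoc, (hcomm (ha i hi) (hb j hj)).eq,
            smul_comm (c ^ #{t ∈ T | t < j})]
      _ = X a b * qMinor c X s T + c • ∑ i ∈ s, c ^ #{x ∈ s | x < i} •
            (X i b * qMinor c X (insert a (s.erase i)) T) := by
          congr 2
          refine sum_congr rfl fun i _ => ?_
          rw [qMinor_insert_min_left c X fun x hx => ha x (mem_of_mem_erase hx)]
      _ = _ := (sum_insert_min c ha fun i U => X i b * qMinor c X U T).symm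

lemma qMinor_transpose
    (hcomm : ∀ ⦃i j : ι⦄ ⦃a b : κ⦄, i < j → a < b → Commute (X j a) (X i b)) (S : Finset ι)
    (T : Finset κ) : qMinor c X.transpose T S = qMinor c X S T := by
  induction T using Finset.induction_on_min generalizing S with
  | empty => rw [qMinor_empty_left, qMinor_empty_right]
  | insert b T hb ih =>
    rw [qMinor_insert_min_left c X.transpose hb, qMinor_insert_min_right hcomm S hb]
    simp only [ih, Matrix.transpose_apply]

namespace IsQManin

variable {S : Finset ι} {T : Finset κ} {i k : ι}

lemma sum_mul_qMinor_erase (hX : IsQManin c X) (hi : i ∈ S) (hk : k ∈ S) :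
    ∑ j ∈ T, c ^ #{t ∈ T | t < j} • (X k j * qMinor c X (S.erase i) (T.erase j)) =
      if k = i then c ^ #{s ∈ S | s < i} • qMinor c X S T else 0 := by
  rw [sum_mul_qMinor]
  split_ifs with hki
  · rw [hki, hX.isQGrassmann.mul_orderedProd_erase hi]
    rfl
  · rw [hX.isQGrassmann.mul_orderedProd_of_mem (mem_erase.2 ⟨hki, hk⟩)]
    rfl

lemma sum_qMinor_erase_mul (hX : IsQManin c X) (hi : i ∈ S) (hk : k ∈ S) :
    ∑ j ∈ T, c ^ #{t ∈ T | j < t} • (qMinor c X (S.erase i) (T.erase j) * X k j) =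
      if k = i then c ^ #{s ∈ S | i < s} • qMinor c X S T else 0 := by
  rw [sum_qMinor_mul]
  split_ifs with hki
  · rw [hki, hX.isQGrassmann.orderedProd_erase_mul hi]
    rfl
  · rw [hX.isQGrassmann.orderedProd_mul_of_mem (mem_erase.2 ⟨hki, hk⟩)]
    rfl

end IsQManin

end QMinor

section QAdjugate

variable {Z R ι : Type*} [CommRing Z] [Ring R] [Algebra Z R] [LinearOrder ι] [Fintype ι]

/-- The quantum adjugate of a square matrix: the entry at `(j, i)` is the quantum minor without row
`i` and column `j`, up to a power of `c`. The usual exponent `j - i` is increased by `n - 1`, where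
`n` is the size of the matrix, so that no inverse of `c` is needed. -/
def qAdjugate (c : Z) (X : Matrix ι ι R) : Matrix ι ι R :=
  Matrix.of fun j i => c ^ (#{t | t < j} + #{s | i < s}) • qMinor c X (univ.erase i) (univ.erase j)

variable {c : Z} {X : Matrix ι ι R}

lemma IsQManin.mul_qAdjugate (hX : IsQManin c X) :
    X * qAdjugate c X =
      Matrix.diagonal fun _ => c ^ (Fintype.card ι - 1) • qMinor c X univ univ := by
  ext k i
  calc (X * qAdjugate c X) k i
      = c ^ #{s | i < s} • ∑ j, c ^ #{t | t < j} •
          (X k j * qMinor c X (univ.erase i) (univ.erase j)) := by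
        simp only [Matrix.mul_apply, qAdjugate, Matrix.of_apply, mul_smul_comm, smul_sum, smul_smul,
          pow_add, mul_comm]
    _ = c ^ #{s | i < s} • if k = i then c ^ #{s | s < i} • qMinor c X univ univ else 0 := by
        rw [hX.sum_mul_qMinor_erase (mem_univ i) (mem_univ k)]
    _ = _ := by
        rw [Matrix.diagonal_apply, smul_ite, smul_zero, smul_smul, ← pow_add, add_comm,
          card_filter_lt_add_card_filter_gt (mem_univ i), card_univ]

lemma qAdjugate_mul (hX : IsQManin c X.transpose)
    (hcomm : ∀ ⦃i j a b : ι⦄, i < j → a < b → Commute (X j a) (X i b)) :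
    qAdjugate c X * X =
      Matrix.diagonal fun _ => c ^ (Fintype.card ι - 1) • qMinor c X univ univ := by
  ext j l
  calc (qAdjugate c X * X) j l
      = c ^ #{t | t < j} • ∑ i, c ^ #{s | i < s} •
          (qMinor c X.transpose (univ.erase j) (univ.erase i) * X.transpose l i) := by
        simp only [Matrix.mul_apply, qAdjugate, Matrix.of_apply, smul_mul_assoc, smul_sum,
          smul_smul, pow_add, qMinor_transpose hcomm, Matrix.transpose_apply]
    _ = c ^ #{t | t < j} • if l = j then c ^ #{t | j < t} • qMinor c X univ univ else 0 := by
        rw [hX.sum_qMinor_erase_mul (mem_univ j) (mem_univ l), qMinor_transpose hcomm]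
    _ = _ := by
        rw [Matrix.diagonal_apply, smul_ite, smul_zero, smul_smul, ← pow_add,
          card_filter_lt_add_card_filter_gt (mem_univ j), card_univ]
        simp only [eq_comm]

lemma IsQManin.commute_qMinor_univ (hX : IsQManin c X) (hX' : IsQManin c X.transpose)
    (hcomm : ∀ ⦃i j a b : ι⦄, i < j → a < b → Commute (X j a) (X i b))
    (hc : IsUnit (algebraMap Z R c)) (k l : ι) : Commute (qMinor c X univ univ) (X k l) := by
  have h : X * qAdjugate c X * X = X * (qAdjugate c X * X) := mul_assoc _ _ _
  rw [hX.mul_qAdjugate, qAdjugate_mul hX' hcomm] at h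
  have hkl := congrFun₂ h k l
  rw [Matrix.diagonal_mul, Matrix.mul_diagonal, smul_mul_assoc, mul_smul_comm] at hkl
  simp only [Algebra.smul_def, map_pow] at hkl
  exact (hc.pow _).mul_left_cancel hkl

end QAdjugate

section PermutationFormula

variable {Z R κ : Type*} [CommRing Z] [Ring R] [Algebra Z R] [LinearOrder κ] {m : ℕ}

lemma tupleInv_cons (j : κ) (g : Fin m → κ) :
    tupleInv (Fin.cons j g : Fin (m + 1) → κ) = #{i | g i < j} + tupleInv g := by
  simp only [tupleInv, card_filter, Fintype.sum_prod_type, Fin.sum_univ_succ, Fin.cons_zero,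
    Fin.cons_succ, Fin.succ_pos, Fin.succ_lt_succ_iff, Fin.not_lt_zero, true_and,
    false_and, if_false, zero_add]

lemma bijOn_univ_cons_iff {j : κ} {g : Fin m → κ} {S : Finset κ} :
    Set.BijOn (Fin.cons j g : Fin (m + 1) → κ) Set.univ S ↔
      j ∈ S ∧ Set.BijOn g Set.univ (S.erase j) := by
  have bijOn_iff {p : ℕ} {f : Fin p → κ} {T : Set κ} :
      Set.BijOn f Set.univ T ↔ Function.Injective f ∧ Set.range f = T := by
    exact ⟨fun h => ⟨Set.injOn_univ.1 h.injOn, by rw [← Set.image_univ, h.image_eq]⟩,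
      fun ⟨hf, hT⟩ => ⟨fun i _ => hT ▸ Set.mem_range_self i, hf.injOn, by simp [Set.SurjOn, hT]⟩⟩
  rw [bijOn_iff, bijOn_iff, Fin.cons_injective_iff, Fin.range_cons, coe_erase]
  constructor
  · rintro ⟨⟨hj, hg⟩, hS⟩
    refine ⟨mem_coe.1 (hS ▸ Set.mem_insert j _), hg, ?_⟩
    rw [← hS, Set.insert_sdiff_self_of_notMem hj]
  · rintro ⟨hj, hg, hS⟩
    refine ⟨⟨by simp [hS], hg⟩, ?_⟩
    rw [hS, Set.insert_sdiff_singleton, Set.insert_eq_of_mem (mem_coe.2 hj)]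

lemma card_filter_lt_of_bijOn {j : κ} {g : Fin m → κ} {S : Finset κ}
    (hg : Set.BijOn g Set.univ (S.erase j)) : #{i | g i < j} = #{s ∈ S | s < j} := by
  refine card_nbij g (fun i hi => ?_) (hg.injOn.mono (Set.subset_univ _)) fun s hs => ?_
  · exact mem_filter.2 ⟨mem_of_mem_erase (hg.mapsTo (Set.mem_univ i)), (mem_filter.1 hi).2⟩
  · obtain ⟨hs, hsj⟩ := mem_filter.1 (mem_coe.1 hs)
    obtain ⟨i, -, rfl⟩ := hg.surjOn (mem_coe.2 (mem_erase.2 ⟨hsj.ne, hs⟩))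
    exact ⟨i, by simpa using hsj, rfl⟩

open Classical in
lemma sum_bijOn_succ [Fintype κ] {M : Type*} [AddCommMonoid M] (S : Finset κ)
    (F : (Fin (m + 1) → κ) → M) :
    ∑ f : Fin (m + 1) → κ with Set.BijOn f Set.univ S, F f =
      ∑ j ∈ S, ∑ g : Fin m → κ with Set.BijOn g Set.univ (S.erase j), F (Fin.cons j g) := by
  have hcons (j : κ) (g : Fin m → κ) :
      Fin.consEquiv (fun _ => κ) (j, g) = (Fin.cons j g : Fin (m + 1) → κ) := rfl
  rw [sum_filter, ← (Fin.consEquiv fun _ => κ).sum_comp, Fintype.sum_prod_type,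
    ← sum_subset (subset_univ S)]
  · refine sum_congr rfl fun j hj => ?_
    simp only [hcons, bijOn_univ_cons_iff, hj, true_and, sum_filter]
  · intro j _ hj
    simp only [hcons, bijOn_univ_cons_iff, hj, false_and, if_false, sum_const_zero]

open Classical in
lemma list_prod_leftWedge_apply [Fintype κ] (c : Z) (x : Fin m → κ → R) (S : Finset κ) :
    (List.ofFn fun i => leftWedge c (x i)).prod (Pi.single ∅ 1) S =
      ∑ f : Fin m → κ with Set.BijOn f Set.univ S,
        c ^ tupleInv f • (List.ofFn fun i => x i (f i)).prod := by
  induction m generalizing S with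
  | zero =>
    rw [sum_filter, Fintype.sum_unique]
    simp [Set.eq_empty_of_isEmpty, Pi.single_apply, tupleInv]
  | succ m ih =>
    rw [List.ofFn_succ, List.prod_cons, Module.End.mul_apply, leftWedge_apply, sum_bijOn_succ]
    refine sum_congr rfl fun j _ => ?_
    rw [ih, mul_sum, smul_sum]
    refine sum_congr rfl fun g hg => ?_
    rw [tupleInv_cons, card_filter_lt_of_bijOn (mem_filter.1 hg).2, mul_smul_comm, smul_smul,
      ← pow_add, List.ofFn_succ, List.prod_cons]
    simp only [Fin.cons_zero, Fin.cons_succ]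

lemma qMinor_univ_eq_sum_perm (c : Z) (X : Matrix (Fin m) (Fin m) R) :
    qMinor c X univ univ = ∑ σ : Equiv.Perm (Fin m),
      c ^ tupleInv (fun i => σ i) • (List.ofFn fun i => X i (σ i)).prod := by
  classical
  rw [qMinor, orderedProd, Fin.sort_univ, ← List.ofFn_eq_map, list_prod_leftWedge_apply]
  simp only [coe_univ, Set.bijOn_univ]
  symm
  refine sum_bij (fun σ _ => σ) (fun σ _ => mem_filter.2 ⟨mem_univ _, σ.bijective⟩)
    (fun σ _ τ _ h => DFunLike.coe_injective h) (fun f hf => ?_) fun σ _ => rfl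
  exact ⟨Equiv.ofBijective f (mem_filter.1 hf).2, mem_univ _, rfl⟩

end PermutationFormula

section QGeneric

variable {Z R : Type*} [CommRing Z] [Ring R] [Algebra Z R] {c : Z} {q : Rˣ} {n m : ℕ}

lemma qGeneric.transpose {X : Matrix (Fin n) (Fin m) R} (hX : qGeneric q X) :
    qGeneric q X.transpose := by
  obtain ⟨hrow, hcol, hcomm, hcross⟩ := hX
  refine ⟨fun k i j => hcol i j k, fun i j k => hrow k i j,
    fun i j k l hij hkl => (hcomm k l i j hkl hij).symm, fun i j k l hij hkl => ?_⟩
  simp only [Matrix.transpose_apply]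
  rw [hcross k l i j hkl hij, hcomm k l i j hkl hij]

lemma qGeneric.isQManin {X : Matrix (Fin n) (Fin m) R} (hX : qGeneric q X)
    (hc : algebraMap Z R c = ((-q)⁻¹ : Rˣ)) : IsQManin c X where
  row_self i a b hab := by
    rw [hX.1 i a b hab, Algebra.smul_def, hc, ← mul_assoc]
    simp
  row_of_lt i j a b hij hab := by
    rw [hX.2.2.2 i j a b hij hab, hX.2.2.1 i j a b hij hab]
    simp only [Algebra.smul_def, hc]
    have hq : ((q⁻¹ : Rˣ) : R) * q = 1 := q.inv_mul
    simp only [inv_neg, Units.val_neg, neg_mul, mul_add, sub_mul, mul_sub, ← mul_assoc, hq]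
    noncomm_ring

lemma qdet_eq_qMinor (hc : algebraMap Z R c = ((-q)⁻¹ : Rˣ)) (X : Matrix (Fin n) (Fin n) R) :
    qdet q X = qMinor c X univ univ := by
  rw [qdet, qMinor_univ_eq_sum_perm]
  refine sum_congr rfl fun σ _ => ?_
  rw [Algebra.smul_def, map_pow, hc, zpow_neg, zpow_natCast, ← inv_pow, Units.val_pow_eq_pow_val]

lemma qGeneric.commute_qdet {X : Matrix (Fin n) (Fin n) R} (hX : qGeneric q X)
    (hq : ∀ r : R, (q : R) * r = r * (q : R)) (k l : Fin n) : Commute (qdet q X) (X k l) := by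
  have hmem : (((-q)⁻¹ : Rˣ) : R) ∈ Subring.center R :=
    Subring.mem_center_iff.2 fun r => (Commute.units_inv_left (u := -q) (by
      simpa using (show Commute (q : R) r from hq r))).eq.symm
  let c : Subring.center R := ⟨_, hmem⟩
  have hc : algebraMap (Subring.center R) R c = ((-q)⁻¹ : Rˣ) := rfl
  rw [qdet_eq_qMinor hc]
  exact (hX.isQManin hc).commute_qMinor_univ (hX.transpose.isQManin hc)
    (fun i j a b => hX.2.2.1 i j a b) (hc ▸ Units.isUnit _) k l

end QGeneric

/-- The quantum determinant of a `q`-generic matrix commutes with every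
entry of the matrix; in particular it is central in the subring generated by the entries. -/
theorem stmt1 {R : Type*} [Ring R] (q : Rˣ) (hq : ∀ r : R, (q : R) * r = r * (q : R))
    {n : ℕ} (X : Matrix (Fin n) (Fin n) R) (hX : qGeneric q X) :
    (∀ k l : Fin n, qdet q X * X k l = X k l * qdet q X) ∧
    (∀ y ∈ Subring.closure {x : R | ∃ k l : Fin n, X k l = x},
      qdet q X * y = y * qdet q X) := by
  have hcomm : ∀ k l : Fin n, Commute (qdet q X) (X k l) := hX.commute_qdet hq
  refine ⟨fun k l => (hcomm k l).eq, fun y hy => ?_⟩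
  have hle : Subring.closure {x : R | ∃ k l : Fin n, X k l = x} ≤
      Subring.centralizer {qdet q X} := by
    rw [Subring.closure_le]
    rintro _ ⟨k, l, rfl⟩
    exact Subring.mem_centralizer_iff.2 (by simpa using (hcomm k l).eq)
  exact Subring.mem_centralizer_iff.1 (hle hy) _ rfl
end

section
/- Let R be a ring with a central invertible element q. Let X be an n×n q-generic matrix over R and Y an n×m q-generic matrix over R, and suppose every entry of X commutes with every entry of Y. Then the product matrix X·Y is again q-generic. -/
theorem sum_sum_eq_sum_diag_add_sum_Ioi {ι M : Type*} [Fintype ι] [LinearOrder ι]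
    [LocallyFiniteOrderTop ι] [LocallyFiniteOrderBot ι] [AddCommMonoid M] (f : ι → ι → M) :
    ∑ a, ∑ b, f a b = ∑ a, f a a + ∑ a, ∑ b ∈ Finset.Ioi a, (f a b + f b a) := by
  rw [Finset.sum_sum_Ioi_add_eq_sum_sum_off_diag (fun a b => f b a), ← Finset.sum_add_distrib]
  exact Finset.sum_congr rfl fun a _ => Fintype.sum_eq_add_sum_compl a (f a)

theorem sum_sum_congr_of_add_swap {ι M : Type*} [Fintype ι] [LinearOrder ι]
    [LocallyFiniteOrderTop ι] [LocallyFiniteOrderBot ι] [AddCommMonoid M] {f g : ι → ι → M}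
    (hdiag : ∀ a, f a a = g a a) (hpair : ∀ a b, a < b → f a b + f b a = g a b + g b a) :
    ∑ a, ∑ b, f a b = ∑ a, ∑ b, g a b := by
  rw [sum_sum_eq_sum_diag_add_sum_Ioi f, sum_sum_eq_sum_diag_add_sum_Ioi g]
  congr 1
  · exact Finset.sum_congr rfl fun a _ => hdiag a
  · exact Finset.sum_congr rfl fun a _ => Finset.sum_congr rfl fun b hb =>
      hpair a b (Finset.mem_Ioi.1 hb)

theorem matrix_mul_apply_mul_mul_apply {l m n R : Type*} [Fintype m] [NonUnitalSemiring R]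
    {X : Matrix l m R} {Y : Matrix m n R} (hXY : ∀ i a b k, Commute (X i a) (Y b k))
    (i j : l) (k k' : n) :
    (X * Y) i k * (X * Y) j k' = ∑ a, ∑ b, X i a * X j b * (Y a k * Y b k') := by
  simp only [Matrix.mul_apply, Finset.sum_mul_sum, (hXY _ _ _ _).symm.mul_mul_mul_comm]

theorem one_add_sub_inv_mul_self {R : Type*} [Ring R] (q : Rˣ) :
    1 + (q - ↑q⁻¹ : R) * q = q * q := by
  rw [sub_mul, Units.inv_mul, add_sub_cancel]

theorem commute_sub_inv_left {R : Type*} [Ring R] {q : Rˣ} {u : R} (hu : Commute (q : R) u) :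
    Commute (q - ↑q⁻¹ : R) u :=
  hu.sub_left hu.units_inv_left

namespace qGeneric

variable {R : Type*} [Ring R] {q : Rˣ} {p n m : ℕ} {X : Matrix (Fin p) (Fin n) R}
  {Y : Matrix (Fin n) (Fin m) R}

theorem mul_row (hq : ∀ i a, Commute (q : R) (X i a)) (hX : qGeneric q X) (hY : qGeneric q Y)
    (hXY : ∀ i a b k, Commute (X i a) (Y b k)) (i : Fin p) {k l : Fin m} (hkl : k < l) :
    (X * Y) i l * (X * Y) i k = q * ((X * Y) i k * (X * Y) i l) := by
  obtain ⟨Xrow, -, -, -⟩ := hX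
  obtain ⟨Yrow, -, Yanti, Ydiag⟩ := hY
  have hXX (a b) : Commute (q : R) (X i a * X i b) := (hq i a).mul_right (hq i b)
  simp only [matrix_mul_apply_mul_mul_apply hXY, Finset.mul_sum]
  refine sum_sum_congr_of_add_swap (fun a => ?_) fun a b hab => ?_
  · rw [Yrow a k l hkl, (hXX a a).left_comm]
  · have hu := hXX a b
    rw [Xrow i a b hab, Yanti a b k l hab hkl, Ydiag a b k l hab hkl, ← mul_add]
    generalize X i a * X i b = u, Y a k * Y b l = c, Y a l * Y b k = d at hu ⊢
    have hqu : Commute (q - ↑q⁻¹ : R) (q * u) :=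
      commute_sub_inv_left ((Commute.refl (q : R)).mul_right hu)
    calc u * d + q * u * (c + (q - ↑q⁻¹) * d)
        = q * u * c + (1 + (q - ↑q⁻¹) * q) * (u * d) := by
          rw [mul_add, ← hqu.left_comm]; noncomm_ring
      _ = q * (u * c + q * u * d) := by
          rw [one_add_sub_inv_mul_self]; noncomm_ring

theorem mul_col (hq : ∀ i a, Commute (q : R) (X i a)) (hX : qGeneric q X) (hY : qGeneric q Y)
    (hXY : ∀ i a b k, Commute (X i a) (Y b k)) {i j : Fin p} (hij : i < j) (k : Fin m) :
    (X * Y) j k * (X * Y) i k = q * ((X * Y) i k * (X * Y) j k) := by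
  obtain ⟨-, Xcol, Xanti, Xdiag⟩ := hX
  obtain ⟨-, Ycol, -, -⟩ := hY
  have hXX (a b) : Commute (q : R) (X i a * X j b) := (hq i a).mul_right (hq j b)
  simp only [matrix_mul_apply_mul_mul_apply hXY, Finset.mul_sum]
  refine sum_sum_congr_of_add_swap (fun a => ?_) fun a b hab => ?_
  · rw [Xcol i j a hij, mul_assoc]
  · have hu := hXX a b
    have hv := hXX b a
    rw [Xanti i j a b hij hab, Xdiag i j a b hij hab, Ycol a b k hab, ← mul_add]
    generalize X i a * X j b = u, X i b * X j a = v, Y a k * Y b k = c at hu hv ⊢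
    calc v * c + (u + (q - ↑q⁻¹) * v) * (q * c)
        = q * (u * c) + (1 + (q - ↑q⁻¹) * q) * (v * c) := by
          rw [add_mul, mul_assoc _ v, ← hu.left_comm, ← hv.left_comm]; noncomm_ring
      _ = q * (u * c + v * (q * c)) := by
          rw [one_add_sub_inv_mul_self, mul_assoc, hv.left_comm, ← mul_add]

theorem mul_antidiag (hq : ∀ i a, Commute (q : R) (X i a)) (hX : qGeneric q X)
    (hY : qGeneric q Y) (hXY : ∀ i a b k, Commute (X i a) (Y b k)) {i j : Fin p} (hij : i < j)
    {k l : Fin m} (hkl : k < l) :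
    (X * Y) j k * (X * Y) i l = (X * Y) i l * (X * Y) j k := by
  obtain ⟨-, Xcol, Xanti, Xdiag⟩ := hX
  obtain ⟨Yrow, -, Yanti, Ydiag⟩ := hY
  have hXX (a b) : Commute (q : R) (X i a * X j b) := (hq i a).mul_right (hq j b)
  simp only [matrix_mul_apply_mul_mul_apply hXY]
  refine sum_sum_congr_of_add_swap (fun a => ?_) fun a b hab => ?_
  · rw [Xcol i j a hij, Yrow a k l hkl, mul_assoc, (hXX a a).left_comm]
  · have hv := commute_sub_inv_left (hXX b a)
    rw [Xanti i j a b hij hab, Xdiag i j a b hij hab, Yanti a b k l hab hkl,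
      Ydiag a b k l hab hkl]
    generalize X i a * X j b = u, X i b * X j a = v, Y a k * Y b l = c, Y a l * Y b k = d
      at hv ⊢
    calc v * c + (u + (q - ↑q⁻¹) * v) * d
        = u * d + (v * c + (q - ↑q⁻¹) * (v * d)) := by noncomm_ring
      _ = u * d + v * (c + (q - ↑q⁻¹) * d) := by rw [hv.left_comm, ← mul_add]

theorem mul_diag (hq : ∀ i a, Commute (q : R) (X i a)) (hX : qGeneric q X) (hY : qGeneric q Y)
    (hXY : ∀ i a b k, Commute (X i a) (Y b k)) {i j : Fin p} (hij : i < j) {k l : Fin m}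
    (hkl : k < l) :
    (X * Y) j l * (X * Y) i k =
      (X * Y) i k * (X * Y) j l + (q - ↑q⁻¹) * ((X * Y) i l * (X * Y) j k) := by
  obtain ⟨-, Xcol, Xanti, Xdiag⟩ := hX
  obtain ⟨Yrow, -, Yanti, Ydiag⟩ := hY
  have hXX (a b) : Commute (q : R) (X i a * X j b) := (hq i a).mul_right (hq j b)
  simp only [matrix_mul_apply_mul_mul_apply hXY, Finset.mul_sum, ← Finset.sum_add_distrib]
  refine sum_sum_congr_of_add_swap (fun a => ?_) fun a b hab => ?_
  · have hu := hXX a a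
    rw [Xcol i j a hij, Yrow a k l hkl]
    generalize X i a * X j a = u, Y a k * Y a l = c at hu ⊢
    calc q * u * (q * c) = q * q * (u * c) := by
          rw [mul_assoc, ← hu.left_comm, ← mul_assoc]
      _ = u * c + (q - ↑q⁻¹) * (u * (q * c)) := by
          rw [← one_add_sub_inv_mul_self, ← hu.left_comm, add_mul, one_mul, mul_assoc]
  · have hu := commute_sub_inv_left (hXX a b)
    have hv := commute_sub_inv_left (hXX b a)
    rw [Xanti i j a b hij hab, Xdiag i j a b hij hab, Yanti a b k l hab hkl,
      Ydiag a b k l hab hkl]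
    generalize X i a * X j b = u, X i b * X j a = v, Y a k * Y b l = c, Y a l * Y b k = d
      at hu hv ⊢
    calc v * d + (u + (q - ↑q⁻¹) * v) * (c + (q - ↑q⁻¹) * d)
        = v * d + u * (c + (q - ↑q⁻¹) * d) + (q - ↑q⁻¹) * (v * (c + (q - ↑q⁻¹) * d)) := by
          rw [add_mul, mul_assoc _ v, add_assoc]
      _ = u * c + (q - ↑q⁻¹) * (u * d) +
            (v * d + (q - ↑q⁻¹) * (v * (c + (q - ↑q⁻¹) * d))) := by
          rw [mul_add u, ← hu.left_comm]; abel

end qGeneric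

theorem stmt2_general {R : Type*} [Ring R] (q : Rˣ) {p n m : ℕ}
    (X : Matrix (Fin p) (Fin n) R) (Y : Matrix (Fin n) (Fin m) R)
    (hq : ∀ i a, Commute (q : R) (X i a)) (hX : qGeneric q X) (hY : qGeneric q Y)
    (hXY : ∀ i a b k, Commute (X i a) (Y b k)) :
    qGeneric q (X * Y) :=
  ⟨fun i _ _ hkl => hX.mul_row hq hY hXY i hkl,
    fun _ _ k hij => hX.mul_col hq hY hXY hij k,
    fun _ _ _ _ hij hkl => hX.mul_antidiag hq hY hXY hij hkl,
    fun _ _ _ _ hij hkl => hX.mul_diag hq hY hXY hij hkl⟩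

/-- The product of an `n×n` and an `n×m` `q`-generic matrix whose entries
mutually commute is again `q`-generic. -/
theorem stmt2 {R : Type*} [Ring R] (q : Rˣ) (hq : ∀ r : R, (q : R) * r = r * (q : R))
    {n m : ℕ} (X : Matrix (Fin n) (Fin n) R) (Y : Matrix (Fin n) (Fin m) R)
    (hX : qGeneric q X) (hY : qGeneric q Y)
    (hcomm : ∀ (i j : Fin n) (k : Fin n) (l : Fin m), X i j * Y k l = Y k l * X i j) :
    qGeneric q (X * Y) :=
  stmt2_general q X Y (fun _ _ => hq _) hX hY hcomm
end

section
/- Let R be a ring, A = (a_{ij}) an n×n matrix over R, and B an n×n matrix with A·B = B·A = I_n. Suppose for a position (i,j) that the submatrix A^{ij} (obtained by deleting row i and column j of A) is invertible, so that the quasideterminant |A|_{ij} is defined. Then |A|_{ij} is invertible with two-sided inverse the (j,i) entry of B: |A|_{ij}·B_{ji} = 1 and B_{ji}·|A|_{ij} = 1. -/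
/-- The `(i,j)`-quasideterminant of `A`, computed with an explicitly given inverse `C`
of the submatrix `A^{ij}` (`A` with row `i` and column `j` deleted):
`|A|_{ij} = a_{ij} − ξ·(A^{ij})⁻¹·ζ`. -/
def qdCore {R : Type*} [Ring R] {n : ℕ} (A : Matrix (Fin (n+1)) (Fin (n+1)) R)
    (i j : Fin (n+1)) (C : Matrix (Fin n) (Fin n) R) : R :=
  A i j - ∑ l : Fin n, ∑ k : Fin n, A i (j.succAbove l) * C l k * A (i.succAbove k) j

/-!
Moving row `i` and column `j` to the end turns the quasideterminant into the Schur complement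
`Y - X * E * V` of a block matrix with rows `U, V` and `X, Y`, where `E` is the inverse of `U`.
Let `V'` and `Y'` be the blocks in the second column of the inverse matrix. Then
`U * V' + V * Y' = 0` gives `E * V * Y' = -V'`, so that
`(Y - X * E * V) * Y' = X * V' + Y * Y' = 1`. The second row of the inverse matrix gives
`Y' * (Y - X * E * V) = 1` in the same way.
-/

section SchurComplement

variable {R k l p q : Type*} [Ring R] [Fintype k] [Fintype l]

/-- The Schur complement, in the block matrix `M`, of its upper left block. As with `qdCore`, the
inverse `E` of that block is an explicit argument, since `Matrix.inv` is available only over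
commutative rings. -/
def schurComplement (M : Matrix (k ⊕ p) (l ⊕ q) R) (E : Matrix l k R) : Matrix p q R :=
  M.toBlocks₂₂ - M.toBlocks₂₁ * E * M.toBlocks₁₂

variable {M : Matrix (k ⊕ p) (l ⊕ q) R} {N : Matrix (l ⊕ q) (k ⊕ p) R} {E : Matrix l k R}

theorem schurComplement_mul_toBlocks₂₂ [Fintype q] [DecidableEq k] [DecidableEq l] [DecidableEq p]
    (hMN : M * N = 1) (hE : E * M.toBlocks₁₁ = 1) :
    schurComplement M E * N.toBlocks₂₂ = 1 := by
  rw [← M.fromBlocks_toBlocks, ← N.fromBlocks_toBlocks, Matrix.fromBlocks_multiply,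
    ← Matrix.fromBlocks_one, Matrix.fromBlocks_inj] at hMN
  obtain ⟨-, h₁₂, -, h₂₂⟩ := hMN
  have hV : E * (M.toBlocks₁₂ * N.toBlocks₂₂) = -N.toBlocks₁₂ := by
    rw [eq_neg_of_add_eq_zero_right h₁₂, Matrix.mul_neg, ← Matrix.mul_assoc, hE, Matrix.one_mul]
  calc schurComplement M E * N.toBlocks₂₂
      = M.toBlocks₂₂ * N.toBlocks₂₂
          - M.toBlocks₂₁ * (E * (M.toBlocks₁₂ * N.toBlocks₂₂)) := by
        simp only [schurComplement, Matrix.sub_mul, Matrix.mul_assoc]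
    _ = M.toBlocks₂₁ * N.toBlocks₁₂ + M.toBlocks₂₂ * N.toBlocks₂₂ := by
        rw [hV, Matrix.mul_neg, sub_neg_eq_add, add_comm]
    _ = 1 := h₂₂

theorem toBlocks₂₂_mul_schurComplement [Fintype p] [DecidableEq k] [DecidableEq l] [DecidableEq q]
    (hNM : N * M = 1) (hE : M.toBlocks₁₁ * E = 1) :
    N.toBlocks₂₂ * schurComplement M E = 1 := by
  rw [← M.fromBlocks_toBlocks, ← N.fromBlocks_toBlocks, Matrix.fromBlocks_multiply,
    ← Matrix.fromBlocks_one, Matrix.fromBlocks_inj] at hNM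
  obtain ⟨-, -, h₂₁, h₂₂⟩ := hNM
  have hX : N.toBlocks₂₂ * M.toBlocks₂₁ * E = -N.toBlocks₂₁ := by
    rw [eq_neg_of_add_eq_zero_right h₂₁, Matrix.neg_mul, Matrix.mul_assoc, hE, Matrix.mul_one]
  calc N.toBlocks₂₂ * schurComplement M E
      = N.toBlocks₂₂ * M.toBlocks₂₂
          - N.toBlocks₂₂ * M.toBlocks₂₁ * E * M.toBlocks₁₂ := by
        simp only [schurComplement, Matrix.mul_sub, Matrix.mul_assoc]
    _ = N.toBlocks₂₁ * M.toBlocks₁₂ + N.toBlocks₂₂ * M.toBlocks₂₂ := by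
        rw [hX, Matrix.neg_mul, sub_neg_eq_add, add_comm]
    _ = 1 := h₂₂

theorem stmt9_general [Fintype p] [Fintype q]
    [DecidableEq k] [DecidableEq l] [DecidableEq p] [DecidableEq q]
    (hMN : M * N = 1) (hNM : N * M = 1)
    (hE₁ : M.toBlocks₁₁ * E = 1) (hE₂ : E * M.toBlocks₁₁ = 1) :
    schurComplement M E * N.toBlocks₂₂ = 1 ∧ N.toBlocks₂₂ * schurComplement M E = 1 :=
  ⟨schurComplement_mul_toBlocks₂₂ hMN hE₂, toBlocks₂₂_mul_schurComplement hNM hE₁⟩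

end SchurComplement

section Fin

variable {R : Type*} {m n : ℕ}

/-- The bijection `Fin n ⊕ Unit ≃ Fin (n + 1)` which is `i.succAbove` on the left summand and takes
the value `i` on the right one, used to move row or column `i` of a matrix to the end. -/
def sumUnitEquivFin (i : Fin (n + 1)) : Fin n ⊕ Unit ≃ Fin (n + 1) :=
  (Equiv.optionEquivSumPUnit (Fin n)).symm.trans (finSuccEquiv' i).symm

/-- The matrix `A` with row `i` and column `j` moved to the end, as a block matrix whose upper left
block is `A^{ij}`. -/
def splitAt (A : Matrix (Fin (m + 1)) (Fin (n + 1)) R) (i : Fin (m + 1)) (j : Fin (n + 1)) :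
    Matrix (Fin m ⊕ Unit) (Fin n ⊕ Unit) R :=
  A.submatrix (sumUnitEquivFin i) (sumUnitEquivFin j)

theorem toBlocks₁₁_splitAt (A : Matrix (Fin (m + 1)) (Fin (n + 1)) R) (i : Fin (m + 1))
    (j : Fin (n + 1)) :
    (splitAt A i j).toBlocks₁₁ = A.submatrix i.succAbove j.succAbove :=
  rfl

theorem toBlocks₂₂_splitAt (A : Matrix (Fin (m + 1)) (Fin (n + 1)) R) (i : Fin (m + 1))
    (j : Fin (n + 1)) : (splitAt A i j).toBlocks₂₂ = Matrix.of fun _ _ => A i j :=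
  rfl

theorem splitAt_mul_splitAt_eq_one [NonAssocSemiring R]
    {A : Matrix (Fin (m + 1)) (Fin (n + 1)) R} {B : Matrix (Fin (n + 1)) (Fin (m + 1)) R}
    (h : A * B = 1) (i : Fin (m + 1)) (j : Fin (n + 1)) :
    splitAt A i j * splitAt B j i = 1 := by
  rw [splitAt, splitAt, Matrix.submatrix_mul_equiv, h, Matrix.submatrix_one_equiv]

theorem schurComplement_splitAt [Ring R] (A : Matrix (Fin (n + 1)) (Fin (n + 1)) R)
    (i j : Fin (n + 1)) (C : Matrix (Fin n) (Fin n) R) :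
    schurComplement (splitAt A i j) C = Matrix.of fun _ _ => qdCore A i j C := by
  ext
  simp only [schurComplement, qdCore, Matrix.sub_apply, Matrix.mul_apply, Finset.sum_mul,
    Matrix.of_apply]
  rw [Finset.sum_comm]
  rfl

end Fin

/-- If `A` has a two-sided inverse `B` and the quasideterminant `|A|_{ij}`
is defined (i.e. `A^{ij}` has a two-sided inverse `C`), then `|A|_{ij}` is invertible with
two-sided inverse the `(j,i)` entry of `B`. -/
theorem stmt9 {R : Type*} [Ring R] {n : ℕ} (A B : Matrix (Fin (n+1)) (Fin (n+1)) R)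
    (hAB : A * B = 1) (hBA : B * A = 1) (i j : Fin (n+1))
    (C : Matrix (Fin n) (Fin n) R)
    (hC1 : A.submatrix i.succAbove j.succAbove * C = 1)
    (hC2 : C * A.submatrix i.succAbove j.succAbove = 1) :
    qdCore A i j C * B j i = 1 ∧ B j i * qdCore A i j C = 1 := by
  rw [← toBlocks₁₁_splitAt] at hC1 hC2
  have h := stmt9_general (splitAt_mul_splitAt_eq_one hAB i j)
    (splitAt_mul_splitAt_eq_one hBA j i) hC1 hC2
  simpa [schurComplement_splitAt, toBlocks₂₂_splitAt, ← Matrix.ext_iff, Matrix.mul_apply] using h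
end

section
/- Let R be a ring and A = (a_{ij}) an n×n matrix over R. Fix a position (r,s) such that A^{rs} is invertible, so that |A|_{rs} is defined. Suppose column s of A is a right-linear combination of the other columns: there exist ρ_j ∈ R for j ≠ s with a_{ks} = ∑_{j≠s} a_{kj}·ρ_j for every row index k. Then |A|_{rs} = 0. -/
section

open Matrix

theorem mulVec_mulVec_of_mul_eq_one {R m n : Type*} [Semiring R] [Fintype m] [Fintype n]
    [DecidableEq n] {C : Matrix n m R} {M : Matrix m n R} (h : C * M = 1) (v : n → R) :
    C *ᵥ (M *ᵥ v) = v := by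
  rw [mulVec_mulVec, h, one_mulVec]

variable {R : Type*} [Ring R] {n : ℕ} (A : Matrix (Fin (n + 1)) (Fin (n + 1)) R)

theorem qdCore_eq_sub_dotProduct_mulVec (i j : Fin (n + 1)) (C : Matrix (Fin n) (Fin n) R) :
    qdCore A i j C =
      A i j - (fun l => A i (j.succAbove l)) ⬝ᵥ (C *ᵥ fun k => A (i.succAbove k) j) := by
  simp only [qdCore, dotProduct, mulVec, Finset.mul_sum, mul_assoc]

theorem stmt10_general (r s : Fin (n + 1)) (C : Matrix (Fin n) (Fin n) R)
    (hC : C * A.submatrix r.succAbove s.succAbove = 1) (ρ : Fin n → R)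
    (hρ : ∀ k, A k s = ∑ j, A k (s.succAbove j) * ρ j) :
    qdCore A r s C = 0 := by
  have entry_eq : A r s = (fun l => A r (s.succAbove l)) ⬝ᵥ ρ := hρ r
  have column_eq : (fun k => A (r.succAbove k) s) = A.submatrix r.succAbove s.succAbove *ᵥ ρ :=
    funext fun k => hρ (r.succAbove k)
  rw [qdCore_eq_sub_dotProduct_mulVec, column_eq, mulVec_mulVec_of_mul_eq_one hC, entry_eq,
    sub_self]

end

/-- If column `s` of `A` is a right-linear combination of the other
columns and the quasideterminant `|A|_{rs}` is defined, then `|A|_{rs} = 0`. -/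
theorem stmt10 {R : Type*} [Ring R] {n : ℕ} (A : Matrix (Fin (n+1)) (Fin (n+1)) R)
    (r s : Fin (n+1)) (C : Matrix (Fin n) (Fin n) R)
    (hC1 : A.submatrix r.succAbove s.succAbove * C = 1)
    (hC2 : C * A.submatrix r.succAbove s.succAbove = 1)
    (ρ : Fin n → R)
    (hρ : ∀ k : Fin (n+1), A k s = ∑ j : Fin n, A k (s.succAbove j) * ρ j) :
    qdCore A r s C = 0 :=
  stmt10_general A r s C hC2 ρ hρ
end

section
/- Let D be a division ring and A = (a_{ij}) an n×n matrix over D. Let i ≠ k be row indices and j ≠ l column indices, and suppose the quasideterminants |A|_{ij}, |A|_{kj}, |A^{kj}|_{il} and |A^{ij}|_{kl} are all defined (the relevant deleted submatrices are invertible) with |A^{kj}|_{il} ≠ 0 and |A^{ij}|_{kl} ≠ 0. Then the column homological relation holds: −(|A^{kj}|_{il})^{−1}·|A|_{ij} = (|A^{ij}|_{kl})^{−1}·|A|_{kj}. -/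
/-!
Quasideterminants are the inverses of the entries of the inverse matrix:
`|B|_{pq} · (B⁻¹)_{qp} = 1 = (B⁻¹)_{qp} · |B|_{pq}`. The homological relation therefore reads
`-(A^{kj})⁻¹_{li} · |A|_{ij} = (A^{ij})⁻¹_{lk} · |A|_{kj}`.

Let `v` and `w` have `j`-th entry `1`, with `A v` supported on row `i` and `A w` on row `k`; then
`(A v)_i = |A|_{ij}` and `(A w)_k = |A|_{kj}`. Since `u = v - w` vanishes at `j`, column `j` may
be dropped from `A u`. Thus `A^{kj} u` is supported on row `i`, with value `|A|_{ij}`, and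
`A^{ij} u` on row `k`, with value `-|A|_{kj}`. Solving either system for `u_l` shows that both
sides equal `-u_l`.
-/

section MatrixVector

open scoped Matrix

variable {R : Type*} {m n : ℕ}

theorem removeNth_single_same [Zero R] (p : Fin (n + 1)) (x : R) :
    p.removeNth (Pi.single p x : Fin (n + 1) → R) = 0 := by
  ext r
  simp [Fin.removeNth_apply]

theorem removeNth_single_succAbove [Zero R] (p : Fin (n + 1)) (r : Fin n) (x : R) :
    p.removeNth (Pi.single (p.succAbove r) x : Fin (n + 1) → R) = Pi.single r x := by
  ext s
  simp [Fin.removeNth_apply, Pi.single_apply]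

theorem apply_eq_mul_of_mulVec_eq_single [Semiring R] {ι κ : Type*} [Fintype ι] [Fintype κ]
    [DecidableEq ι] [DecidableEq κ] {B : Matrix ι κ R} {C : Matrix κ ι R} (hC : C * B = 1)
    {u : κ → R} {p : ι} {x : R} (hu : B *ᵥ u = Pi.single p x) (q : κ) : u q = C q p * x := by
  have hsolve : u = C *ᵥ Pi.single p x := by
    rw [← hu, Matrix.mulVec_mulVec, hC, Matrix.one_mulVec]
  simp [hsolve]

theorem mulVec_apply_eq_add_dotProduct_removeNth [NonUnitalNonAssocSemiring R] {ι : Type*}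
    (B : Matrix ι (Fin (n + 1)) R) (u : Fin (n + 1) → R) (p : ι) (q : Fin (n + 1)) :
    (B *ᵥ u) p = B p q * u q + q.removeNth (B p) ⬝ᵥ q.removeNth u :=
  Fin.sum_univ_succAbove _ q

theorem removeNth_mulVec [NonUnitalNonAssocSemiring R]
    (B : Matrix (Fin (m + 1)) (Fin (n + 1)) R) (u : Fin (n + 1) → R) (p : Fin (m + 1))
    (q : Fin (n + 1)) :
    p.removeNth (B *ᵥ u) = (fun r => p.removeNth (B.col q) r * u q) +
      B.submatrix p.succAbove q.succAbove *ᵥ q.removeNth u :=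
  funext fun r => mulVec_apply_eq_add_dotProduct_removeNth B u (p.succAbove r) q

theorem sub_apply_succAbove_eq_mul_of_mulVec_eq_single [Ring R]
    {A : Matrix (Fin (m + 1)) (Fin (n + 1)) R}
    {k : Fin (m + 1)} {j : Fin (n + 1)} {C : Matrix (Fin n) (Fin m) R}
    (hC : C * A.submatrix k.succAbove j.succAbove = 1) {v w : Fin (n + 1) → R} (hvw : v j = w j)
    {i' : Fin m} {a b : R} (hv : A *ᵥ v = Pi.single (k.succAbove i') a)
    (hw : A *ᵥ w = Pi.single k b) (l' : Fin n) :
    (v - w) (j.succAbove l') = C l' i' * a := by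
  have hdrop : A.submatrix k.succAbove j.succAbove *ᵥ j.removeNth (v - w) = Pi.single i' a := by
    calc
      _ = k.removeNth (A *ᵥ (v - w)) := by
        rw [removeNth_mulVec A (v - w) k j, Pi.sub_apply, hvw, sub_self]
        simp only [mul_zero, ← Pi.zero_def, zero_add]
      _ = k.removeNth (A *ᵥ v) - k.removeNth (A *ᵥ w) := by rw [Matrix.mulVec_sub]; rfl
      _ = Pi.single i' a := by
        rw [hv, hw, removeNth_single_succAbove, removeNth_single_same, sub_zero]
  exact apply_eq_mul_of_mulVec_eq_single hC hdrop l'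

end MatrixVector

section Quasideterminant

open scoped Matrix Ring

variable {R : Type*} [Ring R] {n : ℕ}

theorem qdCore_eq_sub_dotProduct (B : Matrix (Fin (n + 1)) (Fin (n + 1)) R)
    (p q : Fin (n + 1)) (C : Matrix (Fin n) (Fin n) R) :
    qdCore B p q C = B p q - q.removeNth (B p) ⬝ᵥ (C *ᵥ p.removeNth (B.col q)) := by
  simp only [qdCore, dotProduct, Matrix.mulVec, Fin.removeNth_apply, Matrix.col_apply,
    Finset.mul_sum, mul_assoc]

theorem exists_mulVec_eq_single_qdCore {B : Matrix (Fin (n + 1)) (Fin (n + 1)) R}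
    {p q : Fin (n + 1)} {C : Matrix (Fin n) (Fin n) R}
    (hC : B.submatrix p.succAbove q.succAbove * C = 1) :
    ∃ v : Fin (n + 1) → R, v q = 1 ∧ B *ᵥ v = Pi.single p (qdCore B p q C) := by
  set ζ := p.removeNth (B.col q)
  set v : Fin (n + 1) → R := q.insertNth 1 (-(C *ᵥ ζ))
  have hvq : v q = 1 := Fin.insertNth_apply_same ..
  have hrest : q.removeNth v = -(C *ᵥ ζ) := Fin.removeNth_insertNth ..
  have hrow : (B *ᵥ v) p = qdCore B p q C := by
    rw [mulVec_apply_eq_add_dotProduct_removeNth B v p q, hvq, hrest, mul_one, dotProduct_neg,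
      qdCore_eq_sub_dotProduct, sub_eq_add_neg]
  have hkilled : p.removeNth (B *ᵥ v) = 0 := by
    rw [removeNth_mulVec B v p q, hvq, hrest, Matrix.mulVec_neg, Matrix.mulVec_mulVec, hC,
      Matrix.one_mulVec]
    simp [ζ]
  refine ⟨v, hvq, funext <| (Fin.forall_iff_succAbove p).2 ⟨by simp [hrow], fun r => ?_⟩⟩
  simpa [Fin.removeNth_apply] using congrFun hkilled r

theorem eq_qdCore_mul_of_mulVec_eq_single {B : Matrix (Fin (n + 1)) (Fin (n + 1)) R}
    {p q : Fin (n + 1)} {C : Matrix (Fin n) (Fin n) R}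
    (hC : C * B.submatrix p.succAbove q.succAbove = 1) {u : Fin (n + 1) → R} {x : R}
    (hu : B *ᵥ u = Pi.single p x) : x = qdCore B p q C * u q := by
  set ζ := p.removeNth (B.col q)
  have hrest : q.removeNth u = -(C *ᵥ fun r => ζ r * u q) := by
    have hkilled := removeNth_mulVec B u p q
    rw [hu, removeNth_single_same] at hkilled
    rw [← Matrix.mulVec_neg, ← eq_neg_of_add_eq_zero_right hkilled.symm, Matrix.mulVec_mulVec, hC,
      Matrix.one_mulVec]
  calc
    x = (B *ᵥ u) p := by rw [hu, Pi.single_eq_same]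
    _ = B p q * u q - q.removeNth (B p) ⬝ᵥ (C *ᵥ fun r => ζ r * u q) := by
      rw [mulVec_apply_eq_add_dotProduct_removeNth B u p q, hrest, dotProduct_neg, sub_eq_add_neg]
    _ = qdCore B p q C * u q := by
      rw [qdCore_eq_sub_dotProduct, sub_mul]
      simp only [dotProduct, Matrix.mulVec, ζ, Finset.sum_mul, Finset.mul_sum, mul_assoc]

theorem qdCore_mul_inv_apply {B B' : Matrix (Fin (n + 1)) (Fin (n + 1)) R}
    {p q : Fin (n + 1)} {C : Matrix (Fin n) (Fin n) R} (hB : B * B' = 1)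
    (hC : C * B.submatrix p.succAbove q.succAbove = 1) : qdCore B p q C * B' q p = 1 := by
  have hcol : B *ᵥ B'.col p = Pi.single p 1 := by
    rw [← Matrix.mulVec_single_one, Matrix.mulVec_mulVec, hB, Matrix.one_mulVec]
  exact (eq_qdCore_mul_of_mulVec_eq_single hC hcol).symm

theorem inv_apply_mul_qdCore {B B' : Matrix (Fin (n + 1)) (Fin (n + 1)) R}
    {p q : Fin (n + 1)} {C : Matrix (Fin n) (Fin n) R} (hB : B' * B = 1)
    (hC : B.submatrix p.succAbove q.succAbove * C = 1) : B' q p * qdCore B p q C = 1 := by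
  obtain ⟨v, hvq, hv⟩ := exists_mulVec_eq_single_qdCore hC
  rw [← apply_eq_mul_of_mulVec_eq_single hB hv q, hvq]

theorem isUnit_qdCore {B B' : Matrix (Fin (n + 1)) (Fin (n + 1)) R} {p q : Fin (n + 1)}
    {C : Matrix (Fin n) (Fin n) R} (hB : B * B' = 1 ∧ B' * B = 1)
    (hC : B.submatrix p.succAbove q.succAbove * C = 1 ∧
      C * B.submatrix p.succAbove q.succAbove = 1) :
    IsUnit (qdCore B p q C) :=
  isUnit_iff_exists.2 ⟨B' q p, qdCore_mul_inv_apply hB.1 hC.2, inv_apply_mul_qdCore hB.2 hC.1⟩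

theorem inverse_qdCore_eq_inv_apply {B B' : Matrix (Fin (n + 1)) (Fin (n + 1)) R}
    {p q : Fin (n + 1)} {C : Matrix (Fin n) (Fin n) R} (hB : B * B' = 1 ∧ B' * B = 1)
    (hC : B.submatrix p.succAbove q.succAbove * C = 1 ∧
      C * B.submatrix p.succAbove q.succAbove = 1) :
    (qdCore B p q C)⁻¹ʳ = B' q p :=
  left_inv_eq_right_inv (Ring.inverse_mul_cancel _ (isUnit_qdCore hB hC))
    (qdCore_mul_inv_apply hB.1 hC.2)

theorem neg_inv_apply_mul_qdCore_eq {A : Matrix (Fin (n + 1)) (Fin (n + 1)) R}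
    {i j k : Fin (n + 1)} {i' k' : Fin n} (hi' : k.succAbove i' = i) (hk' : i.succAbove k' = k)
    {Cij Ckj : Matrix (Fin n) (Fin n) R}
    (hCij : A.submatrix i.succAbove j.succAbove * Cij = 1 ∧
      Cij * A.submatrix i.succAbove j.succAbove = 1)
    (hCkj : A.submatrix k.succAbove j.succAbove * Ckj = 1 ∧
      Ckj * A.submatrix k.succAbove j.succAbove = 1) (l' : Fin n) :
    -Ckj l' i' * qdCore A i j Cij = Cij l' k' * qdCore A k j Ckj := by
  obtain ⟨v, hvj, hv⟩ := exists_mulVec_eq_single_qdCore hCij.1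
  obtain ⟨w, hwj, hw⟩ := exists_mulVec_eq_single_qdCore hCkj.1
  have hv_sub_w : (v - w) (j.succAbove l') = Ckj l' i' * qdCore A i j Cij :=
    sub_apply_succAbove_eq_mul_of_mulVec_eq_single hCkj.2 (hvj.trans hwj.symm) (hi' ▸ hv) hw l'
  have hw_sub_v : (w - v) (j.succAbove l') = Cij l' k' * qdCore A k j Ckj :=
    sub_apply_succAbove_eq_mul_of_mulVec_eq_single hCij.2 (hwj.trans hvj.symm) (hk' ▸ hw) hv l'
  rw [neg_mul, ← hv_sub_w, ← hw_sub_v, ← Pi.neg_apply, neg_sub]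

theorem stmt11_general (A : Matrix (Fin (n + 2)) (Fin (n + 2)) R) (i k j : Fin (n + 2))
    (i' : Fin (n + 1)) (hi' : k.succAbove i' = i) (k' : Fin (n + 1)) (hk' : i.succAbove k' = k)
    (l₁ : Fin (n + 1)) (Cij : Matrix (Fin (n + 1)) (Fin (n + 1)) R)
    (hCij : A.submatrix i.succAbove j.succAbove * Cij = 1 ∧
      Cij * A.submatrix i.succAbove j.succAbove = 1)
    (Ckj : Matrix (Fin (n + 1)) (Fin (n + 1)) R)
    (hCkj : A.submatrix k.succAbove j.succAbove * Ckj = 1 ∧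
      Ckj * A.submatrix k.succAbove j.succAbove = 1)
    (C₁ : Matrix (Fin n) (Fin n) R)
    (hC₁ : (A.submatrix k.succAbove j.succAbove).submatrix i'.succAbove l₁.succAbove * C₁ = 1 ∧
      C₁ * (A.submatrix k.succAbove j.succAbove).submatrix i'.succAbove l₁.succAbove = 1)
    (C₂ : Matrix (Fin n) (Fin n) R)
    (hC₂ : (A.submatrix i.succAbove j.succAbove).submatrix k'.succAbove l₁.succAbove * C₂ = 1 ∧
      C₂ * (A.submatrix i.succAbove j.succAbove).submatrix k'.succAbove l₁.succAbove = 1) :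
    IsUnit (qdCore (A.submatrix k.succAbove j.succAbove) i' l₁ C₁) ∧
    IsUnit (qdCore (A.submatrix i.succAbove j.succAbove) k' l₁ C₂) ∧
    -(qdCore (A.submatrix k.succAbove j.succAbove) i' l₁ C₁)⁻¹ʳ * qdCore A i j Cij =
      (qdCore (A.submatrix i.succAbove j.succAbove) k' l₁ C₂)⁻¹ʳ * qdCore A k j Ckj := by
  refine ⟨isUnit_qdCore hCkj hC₁, isUnit_qdCore hCij hC₂, ?_⟩
  rw [inverse_qdCore_eq_inv_apply hCkj hC₁, inverse_qdCore_eq_inv_apply hCij hC₂]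
  exact neg_inv_apply_mul_qdCore_eq hi' hk' hCij hCkj l₁

end Quasideterminant

/-- The column homological relations over a division ring:
`−(|A^{kj}|_{il})⁻¹·|A|_{ij} = (|A^{ij}|_{kl})⁻¹·|A|_{kj}` for rows `i ≠ k` and
columns `j ≠ l`, whenever all four quasideterminants are defined and the two inverted
ones are nonzero.  Here `i'`, `k'`, `l₁` are the indices of rows `i`, `k` and column `l`
inside the deleted matrices `A^{kj}`, `A^{ij}`, and `Cij`, `Ckj`, `C₁`, `C₂` are the
(two-sided) inverses of the relevant deleted submatrices witnessing definedness. -/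
theorem stmt11 {D : Type*} [DivisionRing D] {n : ℕ}
    (A : Matrix (Fin (n+2)) (Fin (n+2)) D)
    (i k : Fin (n+2)) (hik : i ≠ k) (j l : Fin (n+2)) (hjl : j ≠ l)
    (i' : Fin (n+1)) (hi' : k.succAbove i' = i)
    (k' : Fin (n+1)) (hk' : i.succAbove k' = k)
    (l₁ : Fin (n+1)) (hl₁ : j.succAbove l₁ = l)
    (Cij : Matrix (Fin (n+1)) (Fin (n+1)) D)
    (hCij : A.submatrix i.succAbove j.succAbove * Cij = 1 ∧
            Cij * A.submatrix i.succAbove j.succAbove = 1)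
    (Ckj : Matrix (Fin (n+1)) (Fin (n+1)) D)
    (hCkj : A.submatrix k.succAbove j.succAbove * Ckj = 1 ∧
            Ckj * A.submatrix k.succAbove j.succAbove = 1)
    (C₁ : Matrix (Fin n) (Fin n) D)
    (hC₁ : (A.submatrix k.succAbove j.succAbove).submatrix i'.succAbove l₁.succAbove * C₁ = 1 ∧
           C₁ * (A.submatrix k.succAbove j.succAbove).submatrix i'.succAbove l₁.succAbove = 1)
    (C₂ : Matrix (Fin n) (Fin n) D)
    (hC₂ : (A.submatrix i.succAbove j.succAbove).submatrix k'.succAbove l₁.succAbove * C₂ = 1 ∧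
           C₂ * (A.submatrix i.succAbove j.succAbove).submatrix k'.succAbove l₁.succAbove = 1)
    (h₁ : qdCore (A.submatrix k.succAbove j.succAbove) i' l₁ C₁ ≠ 0)
    (h₂ : qdCore (A.submatrix i.succAbove j.succAbove) k' l₁ C₂ ≠ 0) :
    -(qdCore (A.submatrix k.succAbove j.succAbove) i' l₁ C₁)⁻¹ * qdCore A i j Cij =
      (qdCore (A.submatrix i.succAbove j.succAbove) k' l₁ C₂)⁻¹ * qdCore A k j Ckj := by
  simpa only [Ring.inverse_eq_inv'] using
    (stmt11_general A i k j i' hi' k' hk' l₁ Cij hCij Ckj hCkj C₁ hC₁ C₂ hC₂).2.2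
end

section
/- Let D be a division ring and A = (a_{ij}) an invertible n×n matrix over D. Fix a position (r,s) and a column index l ≠ s, and suppose all quasideterminants appearing below are defined, with |A^{rs}|_{il} ≠ 0 for every i ≠ r and |A|_{is} ≠ 0 for every i. Then the one-column expansion of the quasideterminant holds: |A|_{rs} = a_{rs} − ∑_{i≠r} |A^{is}|_{rl}·(|A^{rs}|_{il})^{−1}·a_{is}. -/
/-!
Write `M = A^{rs}`, `N = M⁻¹`, and let `ξ` be row `r` of `A` without column `s`. By definition
`|A|_{rs} = a_{rs} − ∑ i, (ξ N)_i a_{is}`, so everything rests on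
`(ξ N)_i · |M|_{il} = |A^{is}|_{rl}` and on the invertibility of `|M|_{il}`.

Put `v = 1` in coordinate `l` and `−(M^{il})⁻¹ ζ` in the others, where `ζ` is column `l` of `M`
without row `i`. Then `M v = |M|_{il} e_i`, hence `N e_i |M|_{il} = v`. Multiplying by `ξ` gives the
quasideterminant of `M` with row `i` replaced by `ξ`, and up to the order of the rows that matrix is
`A^{is}`. Reading off coordinate `l` gives `N_{li} |M|_{il} = 1`; solving `M x = e_i` by elimination
of the coordinates other than `l` gives `|M|_{il} N_{li} = 1`.
-/

open Matrix

lemma dotProduct_eq_add_dotProduct_comp_succAbove {S : Type*} [NonUnitalNonAssocSemiring S] {n : ℕ}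
    (x y : Fin (n + 1) → S) (j : Fin (n + 1)) :
    x ⬝ᵥ y = x j * y j + (x ∘ j.succAbove) ⬝ᵥ (y ∘ j.succAbove) :=
  Fin.sum_univ_succAbove _ j

section Quasideterminant

variable {R : Type*} [Ring R] {n : ℕ}

lemma qdCore_eq_sub_dotProduct_s12 (A : Matrix (Fin (n + 1)) (Fin (n + 1)) R) (i j : Fin (n + 1))
    (C : Matrix (Fin n) (Fin n) R) :
    qdCore A i j C =
      A i j - (A i ∘ j.succAbove) ⬝ᵥ (C *ᵥ fun k => A (i.succAbove k) j) := by
  simp only [qdCore, dotProduct, mulVec, Function.comp_apply, Finset.mul_sum, mul_assoc]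

lemma qdCore_eq_sub_sum_vecMul (A : Matrix (Fin (n + 1)) (Fin (n + 1)) R) (i j : Fin (n + 1))
    (C : Matrix (Fin n) (Fin n) R) :
    qdCore A i j C =
      A i j - ∑ k, ((A i ∘ j.succAbove) ᵥ* C) k * A (i.succAbove k) j := by
  rw [qdCore_eq_sub_dotProduct_s12, dotProduct_mulVec]
  rfl

/-- With `C` the inverse of `A^{ij}`, the column vector with `j`-th entry `1` that `A` maps to a
multiple of `e_i`, namely to `|A|_{ij} e_i`. It is independent of row `i` of `A`, so that `|A|_{ij}`
is linear in that row. -/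
def pivotVec (A : Matrix (Fin (n + 1)) (Fin (n + 1)) R) (i j : Fin (n + 1))
    (C : Matrix (Fin n) (Fin n) R) : Fin (n + 1) → R :=
  j.insertNth (1 : R) (-(C *ᵥ fun k => A (i.succAbove k) j) : Fin n → R)

lemma dotProduct_pivotVec (A : Matrix (Fin (n + 1)) (Fin (n + 1)) R) (i j : Fin (n + 1))
    (C : Matrix (Fin n) (Fin n) R) (ξ : Fin (n + 1) → R) :
    ξ ⬝ᵥ pivotVec A i j C =
      ξ j - (ξ ∘ j.succAbove) ⬝ᵥ (C *ᵥ fun k => A (i.succAbove k) j) := by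
  rw [dotProduct_eq_add_dotProduct_comp_succAbove _ _ j]
  simp [pivotVec, dotProduct, sub_eq_add_neg]

lemma qdCore_updateRow (A : Matrix (Fin (n + 1)) (Fin (n + 1)) R) (i j : Fin (n + 1))
    (C : Matrix (Fin n) (Fin n) R) (ξ : Fin (n + 1) → R) :
    qdCore (A.updateRow i ξ) i j C = ξ ⬝ᵥ pivotVec A i j C := by
  simp [qdCore_eq_sub_dotProduct_s12, dotProduct_pivotVec]

lemma mulVec_pivotVec {A : Matrix (Fin (n + 1)) (Fin (n + 1)) R} {i j : Fin (n + 1)}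
    {C : Matrix (Fin n) (Fin n) R} (hC : A.submatrix i.succAbove j.succAbove * C = 1) :
    A *ᵥ pivotVec A i j C = Pi.single i (qdCore A i j C) := by
  funext p
  rcases Fin.eq_self_or_eq_succAbove i p with rfl | ⟨k, rfl⟩
  · rw [Pi.single_eq_same, mulVec, ← qdCore_updateRow, updateRow_eq_self]
  · have hrow : (A (i.succAbove k) ∘ j.succAbove) ⬝ᵥ (C *ᵥ fun k => A (i.succAbove k) j) =
        A (i.succAbove k) j := by
      change (A.submatrix i.succAbove j.succAbove *ᵥ _) k = _
      rw [mulVec_mulVec, hC, one_mulVec]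
    rw [Pi.single_eq_of_ne (Fin.succAbove_ne i k), mulVec, dotProduct_pivotVec, hrow, sub_self]

lemma vecMul_apply_mul_qdCore {A N : Matrix (Fin (n + 1)) (Fin (n + 1)) R} (hNA : N * A = 1)
    {i j : Fin (n + 1)} {C : Matrix (Fin n) (Fin n) R}
    (hC : A.submatrix i.succAbove j.succAbove * C = 1) (ξ : Fin (n + 1) → R) :
    (ξ ᵥ* N) i * qdCore A i j C = qdCore (A.updateRow i ξ) i j C := by
  calc (ξ ᵥ* N) i * qdCore A i j C
      = (ξ ᵥ* N) ⬝ᵥ (A *ᵥ pivotVec A i j C) := by rw [mulVec_pivotVec hC, dotProduct_single]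
    _ = ξ ⬝ᵥ pivotVec A i j C := by
        rw [← dotProduct_mulVec, mulVec_mulVec, hNA, one_mulVec]
    _ = qdCore (A.updateRow i ξ) i j C := (qdCore_updateRow A i j C ξ).symm

lemma leftInv_apply_mul_qdCore {A N : Matrix (Fin (n + 1)) (Fin (n + 1)) R} (hNA : N * A = 1)
    {i j : Fin (n + 1)} {C : Matrix (Fin n) (Fin n) R}
    (hC : A.submatrix i.succAbove j.succAbove * C = 1) :
    N j i * qdCore A i j C = 1 := by
  simpa [qdCore_updateRow, pivotVec] using vecMul_apply_mul_qdCore hNA hC (Pi.single j 1)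

lemma qdCore_mul_apply_of_mulVec_eq_single {A : Matrix (Fin (n + 1)) (Fin (n + 1)) R}
    {i j : Fin (n + 1)} {C : Matrix (Fin n) (Fin n) R}
    (hC : C * A.submatrix i.succAbove j.succAbove = 1) {x : Fin (n + 1) → R} {c : R}
    (hx : A *ᵥ x = Pi.single i c) :
    qdCore A i j C * x j = c := by
  have hrows : (A.submatrix i.succAbove j.succAbove) *ᵥ (x ∘ j.succAbove) =
      -(MulOpposite.op (x j) • fun k => A (i.succAbove k) j) := by
    funext k
    have hk := congrFun hx (i.succAbove k)
    rw [mulVec, dotProduct_eq_add_dotProduct_comp_succAbove _ _ j,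
      Pi.single_eq_of_ne (Fin.succAbove_ne i k)] at hk
    exact eq_neg_of_add_eq_zero_right hk
  have hsolve : x ∘ j.succAbove =
      -(MulOpposite.op (x j) • (C *ᵥ fun k => A (i.succAbove k) j)) := by
    rw [← mulVec_smul, ← mulVec_neg, ← hrows, mulVec_mulVec, hC, one_mulVec]
  calc qdCore A i j C * x j
      = A i j * x j + (A i ∘ j.succAbove) ⬝ᵥ (x ∘ j.succAbove) := by
        rw [hsolve, dotProduct_neg, dotProduct_smul, op_smul_eq_mul, ← sub_eq_add_neg,
          ← sub_mul, qdCore_eq_sub_dotProduct_s12]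
    _ = (A *ᵥ x) i := (dotProduct_eq_add_dotProduct_comp_succAbove (A i) x j).symm
    _ = c := by rw [hx, Pi.single_eq_same]

lemma qdCore_mul_rightInv_apply {A N : Matrix (Fin (n + 1)) (Fin (n + 1)) R} (hAN : A * N = 1)
    {i j : Fin (n + 1)} {C : Matrix (Fin n) (Fin n) R}
    (hC : C * A.submatrix i.succAbove j.succAbove = 1) :
    qdCore A i j C * N j i = 1 := by
  have hcol : A *ᵥ N.col i = Pi.single i 1 := by
    rw [← mulVec_single_one N, mulVec_mulVec, hAN, one_mulVec]
  exact qdCore_mul_apply_of_mulVec_eq_single hC hcol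

lemma isUnit_qdCore_s12 {A N : Matrix (Fin (n + 1)) (Fin (n + 1)) R}
    (hN : A * N = 1 ∧ N * A = 1) {i j : Fin (n + 1)} {C : Matrix (Fin n) (Fin n) R}
    (hC : A.submatrix i.succAbove j.succAbove * C = 1 ∧
      C * A.submatrix i.succAbove j.succAbove = 1) :
    IsUnit (qdCore A i j C) :=
  ⟨⟨_, N j i, qdCore_mul_rightInv_apply hN.1 hC.2, leftInv_apply_mul_qdCore hN.2 hC.1⟩, rfl⟩

end Quasideterminant

section RowDeletion

variable {R : Type*} {n : ℕ}

lemma succAbove_succAbove_of_succAbove_succAbove_eq {r : Fin (n + 2)} {i r' : Fin (n + 1)}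
    (hr' : (r.succAbove i).succAbove r' = r) (k : Fin n) :
    (r.succAbove i).succAbove (r'.succAbove k) = r.succAbove (i.succAbove k) := by
  obtain rfl : r' = i.predAbove r :=
    Fin.succAbove_right_injective (hr'.trans (Fin.succAbove_succAbove_predAbove r i).symm)
  exact Fin.succAbove_succAbove_succAbove_predAbove r i k

lemma submatrix_submatrix_succAbove_comm (A : Matrix (Fin (n + 2)) (Fin (n + 2)) R)
    {r : Fin (n + 2)} {i r' : Fin (n + 1)} (hr' : (r.succAbove i).succAbove r' = r)
    (s : Fin (n + 2)) (l : Fin (n + 1)) :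
    (A.submatrix (r.succAbove i).succAbove s.succAbove).submatrix r'.succAbove l.succAbove =
      (A.submatrix r.succAbove s.succAbove).submatrix i.succAbove l.succAbove := by
  ext k a
  simp only [submatrix_apply, succAbove_succAbove_of_succAbove_succAbove_eq hr']

lemma qdCore_submatrix_succAbove_eq_updateRow [Ring R]
    (A : Matrix (Fin (n + 2)) (Fin (n + 2)) R)
    {r : Fin (n + 2)} {i r' : Fin (n + 1)} (hr' : (r.succAbove i).succAbove r' = r)
    (s : Fin (n + 2)) (l : Fin (n + 1)) (C : Matrix (Fin n) (Fin n) R) :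
    qdCore (A.submatrix (r.succAbove i).succAbove s.succAbove) r' l C =
      qdCore ((A.submatrix r.succAbove s.succAbove).updateRow i (A r ∘ s.succAbove)) i l C := by
  simp [qdCore, hr', succAbove_succAbove_of_succAbove_succAbove_eq hr']

end RowDeletion

theorem stmt12_general {R : Type*} [Ring R] {n : ℕ}
    (A : Matrix (Fin (n + 2)) (Fin (n + 2)) R) (r s : Fin (n + 2)) (l : Fin (n + 1))
    (r' : Fin (n + 1) → Fin (n + 1)) (hr' : ∀ i, (r.succAbove i).succAbove (r' i) = r)
    (C : Fin (n + 1) → Matrix (Fin n) (Fin n) R)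
    (hC : ∀ i,
      (A.submatrix (r.succAbove i).succAbove s.succAbove).submatrix
          (r' i).succAbove l.succAbove * C i = 1 ∧
      C i * (A.submatrix (r.succAbove i).succAbove s.succAbove).submatrix
          (r' i).succAbove l.succAbove = 1)
    (C' : Fin (n + 1) → Matrix (Fin n) (Fin n) R)
    (hC' : ∀ i,
      (A.submatrix r.succAbove s.succAbove).submatrix i.succAbove l.succAbove * C' i = 1 ∧
      C' i * (A.submatrix r.succAbove s.succAbove).submatrix i.succAbove l.succAbove = 1)
    (N : Matrix (Fin (n + 1)) (Fin (n + 1)) R)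
    (hN : A.submatrix r.succAbove s.succAbove * N = 1 ∧
      N * A.submatrix r.succAbove s.succAbove = 1) :
    qdCore A r s N =
      A r s - ∑ i,
        qdCore (A.submatrix (r.succAbove i).succAbove s.succAbove) (r' i) l (C i) *
          Ring.inverse (qdCore (A.submatrix r.succAbove s.succAbove) i l (C' i)) *
          A (r.succAbove i) s := by
  have hCC' (i) : C i = C' i := by
    refine left_inv_eq_right_inv (hC i).2 ?_
    rw [submatrix_submatrix_succAbove_comm A (hr' i), (hC' i).1]
  have hcoeff (i) : ((A r ∘ s.succAbove) ᵥ* N) i =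
      qdCore (A.submatrix (r.succAbove i).succAbove s.succAbove) (r' i) l (C i) *
        Ring.inverse (qdCore (A.submatrix r.succAbove s.succAbove) i l (C' i)) := by
    rw [Ring.eq_mul_inverse_iff_mul_eq _ _ _ (isUnit_qdCore_s12 hN (hC' i)),
      vecMul_apply_mul_qdCore hN.2 (hC' i).1,
      qdCore_submatrix_succAbove_eq_updateRow A (hr' i), hCC']
  simp only [qdCore_eq_sub_sum_vecMul A r s N, hcoeff]

/-- One-column expansion of the quasideterminant over a division ring:
for an invertible `A` (with two-sided inverse `B`), a position `(r,s)` and a column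
`l ≠ s`, assuming all the quasideterminants involved are defined
(witnessed by the two-sided inverses `C i₁`, `C' i₁`, `Dm i` of the relevant deleted
submatrices) with `|A^{rs}|_{il} ≠ 0` for all `i ≠ r` and `|A|_{is} ≠ 0` for all `i`,
`|A|_{rs} = a_{rs} − ∑_{i≠r} |A^{is}|_{rl}·(|A^{rs}|_{il})⁻¹·a_{is}`.
Rows `i ≠ r` are parametrized as `i = r.succAbove i₁`; `ri i₁` is the index of row `r`
inside `A^{is}`, and `l₁` the index of column `l` after column `s` is deleted. -/
theorem stmt12 {D : Type*} [DivisionRing D] {n : ℕ}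
    (A B : Matrix (Fin (n+2)) (Fin (n+2)) D) (hAB : A * B = 1) (hBA : B * A = 1)
    (r s l : Fin (n+2)) (hls : l ≠ s)
    (l₁ : Fin (n+1)) (hl₁ : s.succAbove l₁ = l)
    (ri : Fin (n+1) → Fin (n+1)) (hri : ∀ i₁, (r.succAbove i₁).succAbove (ri i₁) = r)
    (C : Fin (n+1) → Matrix (Fin n) (Fin n) D)
    (hC : ∀ i₁,
      (A.submatrix (r.succAbove i₁).succAbove s.succAbove).submatrix
          (ri i₁).succAbove l₁.succAbove * C i₁ = 1 ∧
      C i₁ * (A.submatrix (r.succAbove i₁).succAbove s.succAbove).submatrix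
          (ri i₁).succAbove l₁.succAbove = 1)
    (C' : Fin (n+1) → Matrix (Fin n) (Fin n) D)
    (hC' : ∀ i₁,
      (A.submatrix r.succAbove s.succAbove).submatrix i₁.succAbove l₁.succAbove * C' i₁ = 1 ∧
      C' i₁ * (A.submatrix r.succAbove s.succAbove).submatrix i₁.succAbove l₁.succAbove = 1)
    (hne : ∀ i₁, qdCore (A.submatrix r.succAbove s.succAbove) i₁ l₁ (C' i₁) ≠ 0)
    (Dm : Fin (n+2) → Matrix (Fin (n+1)) (Fin (n+1)) D)
    (hDm : ∀ i, A.submatrix i.succAbove s.succAbove * Dm i = 1 ∧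
                Dm i * A.submatrix i.succAbove s.succAbove = 1)
    (hAis : ∀ i, qdCore A i s (Dm i) ≠ 0) :
    qdCore A r s (Dm r) =
      A r s - ∑ i₁ : Fin (n+1),
        qdCore (A.submatrix (r.succAbove i₁).succAbove s.succAbove) (ri i₁) l₁ (C i₁) *
          (qdCore (A.submatrix r.succAbove s.succAbove) i₁ l₁ (C' i₁))⁻¹ *
          A (r.succAbove i₁) s := by
  simpa only [Ring.inverse_eq_inv'] using stmt12_general A r s l₁ ri hri C hC C' hC' (Dm r) (hDm r)
end
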